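/- arXiv:0908.0778 — 3 statements merged into one kernel-verified Lean document; each statement's English description precedes it below -/
import Mathlib

section
/- Let V be a C⁵ perturbed quartic potential with ℓ ∈ {−1,1} equal to the sign of V⁽⁴⁾(0), and let x_n(v;t) = (−1)ⁿ Γ_{n,t}⁻¹ x(Γ_{n,t}v; nπ − ℓt) be the n-renormalized trajectories, where Γ_{n,t} = (8t/(3πn))^{1/2}. Then there exist K > 0, C > 0 and N ≥ 1 such that for every n ≥ N, every t ∈ (0, Kn] and every v ∈ [−1,1], the quantity x_n(v;t) is well defined and |x_n(v;t) − v sin(ℓt(v² − 1))| ≤ C (t/n + t²/n + t^{3/2}/n^{1/2}). -/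
open Real Filter Asymptotics Topology

/-- `V` is a C⁵ perturbed quartic potential `V(x) = x²/2 + ℓx⁴/4 + f(x)` with
`ℓ ∈ {-1,1}` (equal to the sign of `V⁽⁴⁾(0)`) and `|f⁽ⁱ⁾(x)| = O(|x|^{5-i})` as `x → 0`. -/
def PerturbedQuartic (V f : ℝ → ℝ) (l : ℝ) : Prop :=
  (l = 1 ∨ l = -1) ∧ ContDiff ℝ 5 f ∧
  (∀ x : ℝ, V x = x ^ 2 / 2 + l * x ^ 4 / 4 + f x) ∧
  (∀ i : ℕ, i ≤ 5 → (iteratedDeriv i f) =O[𝓝 0] fun x : ℝ => |x| ^ (5 - i))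

/-- `x v` is the solution of the Euler--Lagrange equation `ẍ = -V'(x)` with
initial conditions `x(v;0) = 0`, `ẋ(v;0) = v`, for every `|v| ≤ v₀`. -/
def SolutionFamily (V : ℝ → ℝ) (x : ℝ → ℝ → ℝ) (v₀ : ℝ) : Prop :=
  ∀ v : ℝ, |v| ≤ v₀ → ContDiff ℝ 2 (x v) ∧ x v 0 = 0 ∧ deriv (x v) 0 = v ∧
    ∀ t : ℝ, deriv (deriv (x v)) t = -(deriv V (x v t))

/-!
In the complex phase variable `z = ẋ + i x` the equation of motion reads `ż = i z - F(Im z)` with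
`F(x) = ℓ x³ + O(x⁴)`. A cubic change of variables `Z = z + ℓ h(z)` removes the non-resonant cubic
terms and leaves `Ż = i ω Z + O(|Z|⁴)`, where `ω = 1 + (3ℓ/8) E` and `E = ẋ² + x² + O(|z|⁴)` is
conserved. Conservation of `E` keeps small orbits small, so the variation of constants formula gives
`x(t) = a sin(ω t) + O(|a|³ + |a|⁴ |t|)` for the orbit with initial velocity `a`. At `a = Γ v` and
time `nπ - ℓ t` the phase `ω t` equals `nπ + ℓ t (v² - 1)` up to `O(t²/n)`.
-/

open Complex (I)
open ComplexConjugate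

noncomputable section

section Calculus

variable {𝕜 F : Type*} [RCLike 𝕜] [NormedAddCommGroup F] [NormedSpace 𝕜 F]

lemma isBigO_sub_of_deriv_isBigO_pow {f : 𝕜 → F} {n : ℕ}
    (hf : ∀ᶠ x in 𝓝 0, DifferentiableAt 𝕜 f x)
    (hf' : deriv f =O[𝓝 0] fun x : 𝕜 ↦ x ^ n) :
    (fun x ↦ f x - f 0) =O[𝓝 0] fun x : 𝕜 ↦ x ^ (n + 1) := by
  obtain ⟨C, hC, hbound⟩ := hf'.exists_pos
  obtain ⟨r, hr, hball⟩ := Metric.eventually_nhds_iff_ball.1 (hf.and hbound.bound)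
  refine IsBigO.of_bound C ?_
  filter_upwards [Metric.ball_mem_nhds 0 hr] with x hx
  have hsub : ∀ y ∈ Metric.closedBall (0 : 𝕜) ‖x‖, y ∈ Metric.ball (0 : 𝕜) r := fun y hy ↦
    Metric.closedBall_subset_ball (mem_ball_zero_iff.1 hx) hy
  have hderiv : ∀ y ∈ Metric.closedBall (0 : 𝕜) ‖x‖, ‖deriv f y‖ ≤ C * ‖x‖ ^ n := by
    intro y hy
    have hyx : ‖y‖ ≤ ‖x‖ := mem_closedBall_zero_iff.1 hy
    calc ‖deriv f y‖ ≤ C * ‖y ^ n‖ := (hball y (hsub y hy)).2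
      _ = C * ‖y‖ ^ n := by rw [norm_pow]
      _ ≤ C * ‖x‖ ^ n := by gcongr
  have hmvt := (convex_closedBall (0 : 𝕜) ‖x‖).norm_image_sub_le_of_norm_deriv_le
    (fun y hy ↦ (hball y (hsub y hy)).1) hderiv
    (Metric.mem_closedBall_self (norm_nonneg x)) (mem_closedBall_zero_iff.2 le_rfl)
  calc ‖f x - f 0‖ ≤ C * ‖x‖ ^ n * ‖x - 0‖ := hmvt
    _ = C * ‖x ^ (n + 1)‖ := by rw [sub_zero, norm_pow, pow_succ, mul_assoc]

end Calculus

lemma eventually_forall_norm_le_mul {E F : Type*} [SeminormedAddCommGroup E]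
    [SeminormedAddCommGroup F] {p : E → Prop} (hp : ∀ᶠ w in 𝓝 0, p w) (c : ℝ) :
    ∀ᶠ ζ in 𝓝 (0 : F), ∀ w, ‖w‖ ≤ c * ‖ζ‖ → p w := by
  obtain ⟨r, hr, hball⟩ := Metric.eventually_nhds_iff_ball.1 hp
  have hlim : Tendsto (fun ζ : F ↦ c * ‖ζ‖) (𝓝 0) (𝓝 0) := by
    simpa using (tendsto_norm_zero (E := F)).const_mul c
  filter_upwards [hlim.eventually_lt_const hr] with ζ hζ w hw
  exact hball w (mem_ball_zero_iff.2 (hw.trans_lt hζ))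

lemma norm_sub_exp_mul_le_of_hasDerivAt {Z R : ℝ → ℂ} {ω M : ℝ}
    (hZ : ∀ t, HasDerivAt Z (ω * I * Z t + R t) t) (hR : ∀ t, ‖R t‖ ≤ M) (t : ℝ) :
    ‖Z t - Complex.exp ((ω * t : ℝ) * I) * Z 0‖ ≤ M * |t| := by
  set e : ℝ → ℂ := fun s ↦ Complex.exp ((-(ω * s) : ℝ) * I) with he
  have he_norm (s : ℝ) : ‖e s‖ = 1 := Complex.norm_exp_ofReal_mul_I _
  have he' (s : ℝ) : HasDerivAt e (e s * (-(ω * I))) s := by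
    have hlin : HasDerivAt (fun s : ℝ ↦ ((-(ω * s) : ℝ) : ℂ) * I) (-(ω * I)) s := by
      simpa using (((hasDerivAt_id s).const_mul ω).neg.ofReal_comp).mul_const I
    exact hlin.cexp
  have heZ (s : ℝ) : HasDerivAt (fun s ↦ e s * Z s) (e s * R s) s :=
    ((he' s).mul (hZ s)).congr_deriv (by ring)
  have hmvt := convex_univ.norm_image_sub_le_of_norm_hasDerivWithin_le
    (fun s _ ↦ (heZ s).hasDerivWithinAt)
    (fun s _ ↦ by rw [norm_mul, he_norm, one_mul]; exact hR s) (Set.mem_univ 0) (Set.mem_univ t)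
  have he_mul : Complex.exp ((ω * t : ℝ) * I) * e t = 1 := by
    rw [he, ← Complex.exp_add, ← Complex.exp_zero]
    congr 1
    push_cast
    ring
  have he_zero : e 0 = 1 := by simp [he]
  have hfactor : Z t - Complex.exp ((ω * t : ℝ) * I) * Z 0 =
      Complex.exp ((ω * t : ℝ) * I) * (e t * Z t - e 0 * Z 0) := by
    rw [he_zero]
    linear_combination -Z t * he_mul
  rw [hfactor, norm_mul, Complex.norm_exp_ofReal_mul_I, one_mul]
  simpa using hmvt

/-- The Hamiltonian vector field of `ẍ = -V'(x)` on the phase plane, encoded in `ℂ` as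
`z = ẋ + i x`. In these coordinates the harmonic flow is multiplication by `exp (i t)`. -/
def hamiltonianField (V : ℝ → ℝ) (z : ℂ) : ℂ :=
  ⟨-deriv V z.im, z.re⟩

/-- Twice the energy of a point of the phase plane, normalized to vanish at rest, so that it equals
`v ^ 2` at the initial point `x = 0`, `ẋ = v`. -/
def doubledEnergy (V : ℝ → ℝ) (z : ℂ) : ℝ :=
  z.re ^ 2 + 2 * (V z.im - V 0)

/-- The restoring force `V'` minus its harmonic part. -/
def anharmonicForce (V : ℝ → ℝ) (x : ℝ) : ℝ :=
  deriv V x - x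

/-- The cubic part of the Birkhoff normal form transformation: passing to
`z + normalFormCorrection l z` removes all cubic terms of the vector field except the resonant one
`z ^ 2 * conj z`. Its coefficients come from dividing those of `-l * (Im z) ^ 3` at
`z ^ p * conj z ^ q` by `i - i * (p - q)`, which vanishes exactly on the resonant monomial. -/
def normalFormCorrection (l : ℝ) (z : ℂ) : ℂ :=
  l / 32 * (2 * z ^ 3 - 6 * z * conj z ^ 2 + conj z ^ 3)

/-- The frequency, to first order in the doubled energy `E`, of the oscillations in a potential
`x ^ 2 / 2 + l * x ^ 4 / 4 + O(x ^ 5)`. -/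
def quarticFrequency (l E : ℝ) : ℝ :=
  1 + 3 * l / 8 * E

/-- The defect of the normal form: the deviation of the transformed vector field from rotation at
the energy-dependent frequency. -/
def normalFormDefect (V : ℝ → ℝ) (l : ℝ) (z : ℂ) : ℂ :=
  -((anharmonicForce V z.im - l * z.im ^ 3 : ℝ) : ℂ)
    - l / 32 * anharmonicForce V z.im * (6 * z ^ 2 - 3 * conj z ^ 2 - 12 * z * conj z)
    - 3 * l / 8 * (doubledEnergy V z - ‖z‖ ^ 2 : ℝ) * I * z
    - 3 * l / 8 * doubledEnergy V z * I * normalFormCorrection l z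

lemma hamiltonianField_eq (V : ℝ → ℝ) (z : ℂ) :
    hamiltonianField V z = I * z - anharmonicForce V z.im := by
  apply Complex.ext
  · simp only [hamiltonianField, anharmonicForce, Complex.sub_re, Complex.I_mul_re,
      Complex.ofReal_re]
    ring
  · simp [hamiltonianField]

lemma doubledEnergy_ofReal (V : ℝ → ℝ) (v : ℝ) : doubledEnergy V v = v ^ 2 := by
  simp [doubledEnergy]

section SmallAmplitude

lemma isBigO_comp_im_of_pow {g : ℝ → ℝ} {n : ℕ} (hg : g =O[𝓝 0] fun x ↦ x ^ n) :
    (fun z : ℂ ↦ g z.im) =O[𝓝 0] fun z ↦ ‖z‖ ^ n :=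
  (hg.comp_tendsto (by simpa using Complex.continuous_im.tendsto 0)).trans
    ((IsBigO.of_norm_le Complex.abs_im_le_norm).pow n)

variable {V : ℝ → ℝ} {l : ℝ}

lemma doubledEnergy_sub_norm_sq_isBigO (hV : Differentiable ℝ V)
    (hF : anharmonicForce V =O[𝓝 0] fun x ↦ x ^ 3) :
    (fun z ↦ doubledEnergy V z - ‖z‖ ^ 2) =O[𝓝 0] fun z ↦ ‖z‖ ^ 4 := by
  have hderiv (x : ℝ) : HasDerivAt (fun x ↦ V x - x ^ 2 / 2) (anharmonicForce V x) x :=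
    ((hV x).hasDerivAt.sub ((hasDerivAt_pow 2 x).div_const 2)).congr_deriv
      (by simp [anharmonicForce])
  have hint := isBigO_sub_of_deriv_isBigO_pow
    (Eventually.of_forall fun x ↦ (hderiv x).differentiableAt)
    (hF.congr_left fun x ↦ (hderiv x).deriv.symm)
  refine ((isBigO_comp_im_of_pow hint).const_mul_left 2).congr_left fun z ↦ ?_
  rw [doubledEnergy, ← Complex.normSq_eq_norm_sq, Complex.normSq_apply]
  ring

lemma pow_mul_conj_pow_isBigO (m n : ℕ) :
    (fun z : ℂ ↦ z ^ m * conj z ^ n) =O[𝓝 0] fun z ↦ ‖z‖ ^ (m + n) :=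
  IsBigO.of_norm_le fun z ↦ by simp [pow_add]

lemma normalFormCorrection_isBigO (l : ℝ) :
    normalFormCorrection l =O[𝓝 0] fun z ↦ ‖z‖ ^ 3 := by
  have h₃₀ := (pow_mul_conj_pow_isBigO 3 0).const_mul_left 2
  have h₁₂ := (pow_mul_conj_pow_isBigO 1 2).const_mul_left 6
  have h₀₃ := pow_mul_conj_pow_isBigO 0 3
  refine (((h₃₀.sub h₁₂).add h₀₃).const_mul_left (l / 32 : ℂ)).congr_left fun z ↦ ?_
  rw [normalFormCorrection]
  ring

lemma doubledEnergy_isBigO (hV : Differentiable ℝ V)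
    (hF : anharmonicForce V =O[𝓝 0] fun x ↦ x ^ 3) :
    doubledEnergy V =O[𝓝 0] fun z ↦ ‖z‖ ^ 2 :=
  (((doubledEnergy_sub_norm_sq_isBigO hV hF).trans
    (isLittleO_norm_pow_norm_pow (by norm_num)).isBigO).add (isBigO_refl _ _)).congr_left
      fun z ↦ sub_add_cancel _ _

lemma anharmonicForce_isBigO
    (hF : (fun x ↦ anharmonicForce V x - l * x ^ 3) =O[𝓝 0] fun x ↦ x ^ 4) :
    anharmonicForce V =O[𝓝 0] fun x ↦ x ^ 3 :=
  ((hF.trans (isLittleO_pow_pow (by norm_num)).isBigO).add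
    ((isBigO_refl _ _).const_mul_left l)).congr_left fun x ↦ sub_add_cancel _ _

lemma normalFormDefect_isBigO (hV : Differentiable ℝ V)
    (hF : (fun x ↦ anharmonicForce V x - l * x ^ 3) =O[𝓝 0] fun x ↦ x ^ 4) :
    normalFormDefect V l =O[𝓝 0] fun z ↦ ‖z‖ ^ 4 := by
  have hF₃ := anharmonicForce_isBigO hF
  have hid : (fun z : ℂ ↦ z) =O[𝓝 0] fun z ↦ ‖z‖ := (isBigO_refl _ _).norm_right
  have h54 : (fun z : ℂ ↦ ‖z‖ ^ 5) =O[𝓝 0] fun z ↦ ‖z‖ ^ 4 :=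
    (isLittleO_norm_pow_norm_pow (by norm_num)).isBigO
  have hquad : (fun z : ℂ ↦ 6 * z ^ 2 - 3 * conj z ^ 2 - 12 * z * conj z) =O[𝓝 0]
      fun z ↦ ‖z‖ ^ 2 :=
    ((((pow_mul_conj_pow_isBigO 2 0).const_mul_left 6).sub
      ((pow_mul_conj_pow_isBigO 0 2).const_mul_left 3)).sub
      ((pow_mul_conj_pow_isBigO 1 1).const_mul_left 12)).congr_left fun z ↦ by ring
  have hquartic := Complex.isBigO_ofReal_left.2 (isBigO_comp_im_of_pow hF)
  have hforce := (Complex.isBigO_ofReal_left.2 (isBigO_comp_im_of_pow hF₃)).mul hquad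
  have henergy := (Complex.isBigO_ofReal_left.2 (doubledEnergy_sub_norm_sq_isBigO hV hF₃)).mul hid
  have hcorr := (Complex.isBigO_ofReal_left.2 (doubledEnergy_isBigO hV hF₃)).mul
    (normalFormCorrection_isBigO l)
  simp only [← pow_add, ← pow_succ] at hforce henergy hcorr
  refine (((hquartic.neg_left.sub ((hforce.trans h54).const_mul_left (l / 32))).sub
    ((henergy.trans h54).const_mul_left (3 * l / 8 * I))).sub
    ((hcorr.trans h54).const_mul_left (3 * l / 8 * I))).congr_left fun z ↦ ?_
  rw [normalFormDefect]
  ring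

end SmallAmplitude

section IntegralCurve

variable {V : ℝ → ℝ} {z : ℝ → ℂ}

lemma doubledEnergy_eq_of_isIntegralCurve (hV : Differentiable ℝ V)
    (hz : IsIntegralCurve z fun _ ↦ hamiltonianField V) (t : ℝ) :
    doubledEnergy V (z t) = doubledEnergy V (z 0) := by
  have hre (s : ℝ) : HasDerivAt (fun s ↦ (z s).re) (-deriv V (z s).im) s :=
    Complex.reCLM.hasFDerivAt.comp_hasDerivAt s (hz s)
  have him (s : ℝ) : HasDerivAt (fun s ↦ (z s).im) (z s).re s :=
    Complex.imCLM.hasFDerivAt.comp_hasDerivAt s (hz s)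
  have hE (s : ℝ) : HasDerivAt (fun s ↦ doubledEnergy V (z s)) 0 s := by
    have hVz := (hV (z s).im).hasDerivAt.comp s (him s)
    exact (((hre s).pow 2).add ((hVz.sub_const (V 0)).const_mul 2)).congr_deriv (by
      simp only [Nat.cast_ofNat]; ring)
  exact is_const_of_deriv_eq_zero (fun s ↦ (hE s).differentiableAt) (fun s ↦ (hE s).deriv) t 0

lemma hasDerivAt_add_normalFormCorrection (l : ℝ)
    (hz : IsIntegralCurve z fun _ ↦ hamiltonianField V) (t : ℝ) :
    HasDerivAt (fun s ↦ z s + normalFormCorrection l (z s))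
      (quarticFrequency l (doubledEnergy V (z t)) * I * (z t + normalFormCorrection l (z t)) +
        normalFormDefect V l (z t)) t := by
  have him_cube : ((z t).im : ℂ) ^ 3 = I / 8 * (z t - conj (z t)) ^ 3 := by
    rw [Complex.sub_conj]
    push_cast
    linear_combination (1 - I ^ 2) * ((z t).im : ℂ) ^ 3 * Complex.I_sq
  have hnorm : ((‖z t‖ : ℝ) : ℂ) ^ 2 = z t * conj (z t) := by
    rw [Complex.mul_conj']
  have hconj : HasDerivAt (fun s ↦ conj (z s)) (conj (hamiltonianField V (z t))) t := (hz t).star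
  have hd := (hz t).add (((((hz t).pow 3).const_mul 2).sub (((hz t).const_mul 6).mul
    (hconj.pow 2)) |>.add (hconj.pow 3)).const_mul (l / 32 : ℂ))
  refine hd.congr_deriv ?_
  simp only [hamiltonianField_eq, normalFormDefect, normalFormCorrection, quarticFrequency,
    map_sub, map_mul, Complex.conj_I, Complex.conj_ofReal, Pi.pow_apply]
  push_cast
  rw [him_cube, hnorm]
  ring

lemma eventually_forall_norm_le_two_mul (hV : Differentiable ℝ V)
    (hF : anharmonicForce V =O[𝓝 0] fun x ↦ x ^ 3) :
    ∀ᶠ ζ in 𝓝 (0 : ℂ), ∀ z, IsIntegralCurve z (fun _ ↦ hamiltonianField V) → z 0 = ζ →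
      ∀ t, ‖z t‖ ≤ 2 * ‖ζ‖ := by
  have henergy : ∀ᶠ w in 𝓝 (0 : ℂ), ‖doubledEnergy V w - ‖w‖ ^ 2‖ ≤ 1 / 2 * ‖‖w‖ ^ 2‖ :=
    ((doubledEnergy_sub_norm_sq_isBigO hV hF).trans_isLittleO
      (isLittleO_norm_pow_norm_pow (by norm_num))).def (by norm_num)
  obtain ⟨r, hr, hball⟩ := Metric.nhds_basis_closedBall.eventually_iff.1 henergy
  have hequiv (w : ℂ) (hw : ‖w‖ ≤ r) :
      ‖w‖ ^ 2 / 2 ≤ doubledEnergy V w ∧ doubledEnergy V w ≤ 3 / 2 * ‖w‖ ^ 2 := by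
    have h := hball (mem_closedBall_zero_iff.2 hw)
    rw [Real.norm_eq_abs, norm_pow, norm_norm, abs_le] at h
    exact ⟨by linarith, by linarith⟩
  filter_upwards [Metric.ball_mem_nhds 0 (half_pos hr)] with ζ hζ z hz hz₀
  have hζr : ‖ζ‖ < r / 2 := mem_ball_zero_iff.1 hζ
  have hbound (t : ℝ) (ht : ‖z t‖ ≤ r) : ‖z t‖ ≤ 2 * ‖ζ‖ := by
    have hcons : doubledEnergy V (z t) = doubledEnergy V ζ :=
      hz₀ ▸ doubledEnergy_eq_of_isIntegralCurve hV hz t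
    refine le_of_sq_le_sq ?_ (by positivity)
    nlinarith [(hequiv (z t) ht).1, (hequiv ζ (by linarith)).2, sq_nonneg ‖ζ‖]
  -- Leaving the ball of radius `r` would mean crossing `‖z‖ = r`, where still `‖z‖ ≤ 2 * ‖ζ‖ < r`.
  refine fun t ↦ hbound t ?_
  by_contra! ht
  have hcont : Continuous z := continuous_iff_continuousAt.2 fun s ↦ (hz s).continuousAt
  obtain ⟨s, hs⟩ : r ∈ Set.range fun s ↦ ‖z s‖ :=
    mem_range_of_exists_le_of_exists_ge hcont.norm ⟨0, by rw [hz₀]; linarith⟩ ⟨t, ht.le⟩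
  linarith [hbound s hs.le, show ‖z s‖ = r from hs]

lemma exists_eventually_norm_sub_rotation_le {l : ℝ} (hV : Differentiable ℝ V)
    (hF : (fun x ↦ anharmonicForce V x - l * x ^ 3) =O[𝓝 0] fun x ↦ x ^ 4) :
    ∃ C > 0, ∀ᶠ ζ in 𝓝 (0 : ℂ), ∀ z, IsIntegralCurve z (fun _ ↦ hamiltonianField V) → z 0 = ζ →
      ∀ t, ‖z t - Complex.exp ((quarticFrequency l (doubledEnergy V ζ) * t : ℝ) * I) * ζ‖ ≤
        C * (‖ζ‖ ^ 3 + ‖ζ‖ ^ 4 * |t|) := by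
  obtain ⟨A, hA, hcorr⟩ := (normalFormCorrection_isBigO l).exists_pos
  obtain ⟨D, hD, hdefect⟩ := (normalFormDefect_isBigO hV hF).exists_pos
  refine ⟨9 * A + 16 * D, by positivity, ?_⟩
  filter_upwards [eventually_forall_norm_le_two_mul hV (anharmonicForce_isBigO hF),
    eventually_forall_norm_le_mul (hcorr.bound.and hdefect.bound) 2]
    with ζ hstable hsmall z hz hz₀ t
  simp only [norm_pow, norm_norm] at hsmall
  set e : ℂ := Complex.exp ((quarticFrequency l (doubledEnergy V ζ) * t : ℝ) * I)
  have hcorr_t : ‖normalFormCorrection l (z t)‖ ≤ A * (2 * ‖ζ‖) ^ 3 :=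
    (hsmall (z t) (hstable z hz hz₀ t)).1.trans (by gcongr; exact hstable z hz hz₀ t)
  have hcorr_zero : ‖e * normalFormCorrection l ζ‖ ≤ A * ‖ζ‖ ^ 3 := by
    rw [norm_mul, Complex.norm_exp_ofReal_mul_I, one_mul]
    exact (hsmall ζ (by linarith [norm_nonneg ζ])).1
  have hdefect_s (s : ℝ) : ‖normalFormDefect V l (z s)‖ ≤ D * (2 * ‖ζ‖) ^ 4 :=
    (hsmall (z s) (hstable z hz hz₀ s)).2.trans (by gcongr; exact hstable z hz hz₀ s)
  have hrotation : ‖z t + normalFormCorrection l (z t) - e * (ζ + normalFormCorrection l ζ)‖ ≤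
      D * (2 * ‖ζ‖) ^ 4 * |t| := by
    have h := norm_sub_exp_mul_le_of_hasDerivAt (fun s ↦ by
      have hd := hasDerivAt_add_normalFormCorrection l hz s
      rwa [doubledEnergy_eq_of_isIntegralCurve hV hz s, hz₀] at hd) hdefect_s t
    rwa [hz₀] at h
  calc ‖z t - e * ζ‖
      = ‖(z t + normalFormCorrection l (z t) - e * (ζ + normalFormCorrection l ζ))
          - normalFormCorrection l (z t) + e * normalFormCorrection l ζ‖ := by congr 1; ring
    _ ≤ D * (2 * ‖ζ‖) ^ 4 * |t| + A * (2 * ‖ζ‖) ^ 3 + A * ‖ζ‖ ^ 3 :=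
        norm_add_le_of_le (norm_sub_le_of_le hrotation hcorr_t) hcorr_zero
    _ = 9 * A * ‖ζ‖ ^ 3 + 16 * D * (‖ζ‖ ^ 4 * |t|) := by ring
    _ ≤ (9 * A + 16 * D) * (‖ζ‖ ^ 3 + ‖ζ‖ ^ 4 * |t|) := by
        have h₁ : 0 ≤ 9 * A * (‖ζ‖ ^ 4 * |t|) := by positivity
        have h₂ : 0 ≤ 16 * D * ‖ζ‖ ^ 3 := by positivity
        linarith

end IntegralCurve

section SolutionFamily

variable {V : ℝ → ℝ} {x : ℝ → ℝ → ℝ} {v₀ : ℝ}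

/-- The curve `γ' + i γ` traced in the phase plane by a motion `γ` on the line. -/
def phaseCurve (γ : ℝ → ℝ) (t : ℝ) : ℂ :=
  deriv γ t + γ t * I

lemma SolutionFamily.isIntegralCurve_phaseCurve (hx : SolutionFamily V x v₀) {v : ℝ}
    (hv : |v| ≤ v₀) : IsIntegralCurve (phaseCurve (x v)) fun _ ↦ hamiltonianField V := by
  obtain ⟨hsmooth, -, -, hode⟩ := hx v hv
  intro t
  have hpos : HasDerivAt (x v) (deriv (x v) t) t :=
    (hsmooth.differentiable two_ne_zero t).hasDerivAt
  have hvel : HasDerivAt (deriv (x v)) (-deriv V (x v t)) t :=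
    hode t ▸ (hsmooth.differentiable_deriv_two t).hasDerivAt
  refine (hvel.ofReal_comp.add (hpos.ofReal_comp.mul_const I)).congr_deriv ?_
  simp [hamiltonianField, phaseCurve, Complex.mk_eq_add_mul_I]

lemma SolutionFamily.phaseCurve_zero (hx : SolutionFamily V x v₀) {v : ℝ} (hv : |v| ≤ v₀) :
    phaseCurve (x v) 0 = v := by
  obtain ⟨-, hpos, hvel, -⟩ := hx v hv
  simp [phaseCurve, hpos, hvel]

lemma SolutionFamily.exists_eventually_abs_sub_sin_le {l : ℝ} (hx : SolutionFamily V x v₀)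
    (hv₀ : 0 < v₀) (hV : Differentiable ℝ V)
    (hF : (fun x ↦ anharmonicForce V x - l * x ^ 3) =O[𝓝 0] fun x ↦ x ^ 4) :
    ∃ C > 0, ∀ᶠ a in 𝓝 (0 : ℝ), ∀ t,
      |x a t - a * sin (quarticFrequency l (a ^ 2) * t)| ≤ C * (|a| ^ 3 + |a| ^ 4 * |t|) := by
  obtain ⟨C, hC, hrotation⟩ := exists_eventually_norm_sub_rotation_le hV hF
  refine ⟨C, hC, ?_⟩
  have hofReal : Tendsto (fun a : ℝ ↦ (a : ℂ)) (𝓝 0) (𝓝 0) := by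
    simpa using Complex.continuous_ofReal.tendsto 0
  filter_upwards [hofReal.eventually hrotation, Metric.closedBall_mem_nhds 0 hv₀]
    with a ha hav t
  have hav : |a| ≤ v₀ := mem_closedBall_zero_iff.1 hav
  have h := ha _ (hx.isIntegralCurve_phaseCurve hav) (hx.phaseCurve_zero hav) t
  rw [doubledEnergy_ofReal, Complex.norm_real, Real.norm_eq_abs] at h
  refine le_trans (le_of_eq_of_le ?_ (Complex.abs_im_le_norm _)) h
  rw [Complex.sub_im, Complex.im_mul_ofReal, Complex.exp_ofReal_mul_I_im, mul_comm a]
  simp [phaseCurve]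

end SolutionFamily

section Renormalization

/-- The scaling parameter `Γ_{n,t} = (8t/(3πn))^{1/2}`. At amplitude `Γ_{n,t} v` the quartic
frequency shift accumulates the phase `ℓ t v²` over the time `n π`. -/
def scalingParameter (n : ℕ) (t : ℝ) : ℝ :=
  √(8 * t / (3 * π * n))

/-- The `n`-renormalized trajectory `x_n(v;t)` of the family of motions `x`. -/
def renormalizedTrajectory (l : ℝ) (x : ℝ → ℝ → ℝ) (n : ℕ) (v t : ℝ) : ℝ :=
  (-1) ^ n * (scalingParameter n t)⁻¹ * x (scalingParameter n t * v) (n * π - l * t)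

/-- The asymptotic trajectory `X_ℓ(v;t)`. -/
def asymptoticTrajectory (l v t : ℝ) : ℝ :=
  v * sin (l * t * (v ^ 2 - 1))

variable {n : ℕ} {t : ℝ}

lemma scalingParameter_pos (hn : 0 < n) (ht : 0 < t) : 0 < scalingParameter n t :=
  Real.sqrt_pos.2 (by positivity)

lemma scalingParameter_sq (n : ℕ) (ht : 0 ≤ t) :
    scalingParameter n t ^ 2 = 8 * t / (3 * π * n) :=
  Real.sq_sqrt (by positivity)

lemma scalingParameter_sq_le (n : ℕ) (ht : 0 ≤ t) : scalingParameter n t ^ 2 ≤ t / n :=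
  calc scalingParameter n t ^ 2 = 8 / (3 * π) * (t / n) := by
        rw [scalingParameter_sq n ht, mul_div_mul_comm]
    _ ≤ 1 * (t / n) := by
        gcongr
        rw [div_le_one (by positivity)]
        linarith [pi_gt_three]
    _ = t / n := one_mul _

lemma scalingParameter_cube_mul_le (n : ℕ) (ht : 0 ≤ t) :
    scalingParameter n t ^ 3 * n ≤ t ^ (3 / 2 : ℝ) / √n := by
  have hle : scalingParameter n t ≤ √t / √n := by
    rw [← Real.sqrt_div ht]
    exact Real.le_sqrt_of_sq_le (scalingParameter_sq_le n ht)
  have hpow : t ^ (3 / 2 : ℝ) = √t ^ 3 := by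
    rw [Real.sqrt_eq_rpow, ← Real.rpow_mul_natCast ht]
    norm_num
  calc scalingParameter n t ^ 3 * n ≤ (√t / √n) ^ 3 * √n ^ 2 := by
        rw [Real.sq_sqrt n.cast_nonneg]
        gcongr
        exact Real.sqrt_nonneg _
    _ = t ^ (3 / 2 : ℝ) / √n := by
        rw [hpow]
        field_simp

lemma sin_quarticFrequency_mul (l v : ℝ) (hn : 0 < n) (ht : 0 ≤ t) :
    sin (quarticFrequency l ((scalingParameter n t * v) ^ 2) * (n * π - l * t)) =
      (-1) ^ n * sin (l * t * (v ^ 2 - 1) -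
        3 / 8 * l ^ 2 * scalingParameter n t ^ 2 * v ^ 2 * t) := by
  have hphase : 3 / 8 * scalingParameter n t ^ 2 * (n * π) = t := by
    rw [scalingParameter_sq n ht]
    field_simp
  rw [← Real.sin_add_nat_mul_pi, quarticFrequency]
  congr 1
  linear_combination l * v ^ 2 * hphase

lemma abs_neg_one_pow_mul_sin_sub_le (l : ℝ) {v : ℝ} (hn : 0 < n) (ht : 0 ≤ t) (hv : |v| ≤ 1) :
    |(-1) ^ n * sin (quarticFrequency l ((scalingParameter n t * v) ^ 2) * (n * π - l * t)) -
      sin (l * t * (v ^ 2 - 1))| ≤ l ^ 2 * (t ^ 2 / n) := by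
  have hsign : ((-1 : ℝ) ^ n) * (-1) ^ n = 1 := by rw [← mul_pow]; norm_num
  have hv2 : v ^ 2 ≤ 1 := (sq_le_one_iff_abs_le_one v).2 hv
  rw [sin_quarticFrequency_mul l v hn ht, ← mul_assoc, hsign, one_mul]
  refine (Real.abs_sin_sub_sin_le _ _).trans ?_
  rw [sub_sub_cancel_left, abs_neg, abs_of_nonneg (by positivity)]
  calc 3 / 8 * l ^ 2 * scalingParameter n t ^ 2 * v ^ 2 * t
      ≤ 1 * l ^ 2 * (t / n) * 1 * t := by
        gcongr
        · norm_num
        · exact scalingParameter_sq_le n ht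
    _ = l ^ 2 * (t ^ 2 / n) := by ring

lemma abs_renormalizedTrajectory_sub_le (l : ℝ) (x : ℝ → ℝ → ℝ) {v : ℝ} (hn : 0 < n) (ht : 0 < t)
    (hv : |v| ≤ 1) :
    |renormalizedTrajectory l x n v t - asymptoticTrajectory l v t| ≤
      (scalingParameter n t)⁻¹ * |x (scalingParameter n t * v) (n * π - l * t) -
        scalingParameter n t * v *
          sin (quarticFrequency l ((scalingParameter n t * v) ^ 2) * (n * π - l * t))| +
      l ^ 2 * (t ^ 2 / n) := by
  have hΓ := scalingParameter_pos hn ht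
  have hphase := abs_neg_one_pow_mul_sin_sub_le l hn ht.le hv
  set Γ := scalingParameter n t
  set S := sin (quarticFrequency l ((Γ * v) ^ 2) * (n * π - l * t))
  have hsplit : renormalizedTrajectory l x n v t - asymptoticTrajectory l v t =
      (-1) ^ n * Γ⁻¹ * (x (Γ * v) (n * π - l * t) - Γ * v * S) +
        v * ((-1) ^ n * S - sin (l * t * (v ^ 2 - 1))) := by
    rw [renormalizedTrajectory, asymptoticTrajectory]
    linear_combination (-1) ^ n * v * S * inv_mul_cancel₀ hΓ.ne'
  rw [hsplit]
  refine (abs_add_le _ _).trans (add_le_add (le_of_eq ?_) ?_)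
  · rw [abs_mul, abs_mul, abs_neg_one_pow, one_mul, abs_inv, abs_of_pos hΓ]
  · rw [abs_mul]
    exact (mul_le_of_le_one_left (abs_nonneg _) hv).trans hphase

lemma inv_scalingParameter_mul_cubic_le {l a K : ℝ} (hn : 0 < n) (ht : 0 < t) (htK : t ≤ K * n)
    (ha : |a| ≤ scalingParameter n t) :
    (scalingParameter n t)⁻¹ * (|a| ^ 3 + |a| ^ 4 * |n * π - l * t|) ≤
      t / n + (π + |l| * K) * (t ^ (3 / 2 : ℝ) / √n) := by
  have hK : 0 ≤ K := nonneg_of_mul_nonneg_left (ht.le.trans htK) (by positivity)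
  have hΓ := scalingParameter_pos hn ht
  have htime : |n * π - l * t| ≤ (π + |l| * K) * n :=
    calc |n * π - l * t| ≤ n * π + |l| * t := by
          simpa [abs_mul, abs_of_pos pi_pos, abs_of_pos ht] using abs_sub (n * π) (l * t)
      _ ≤ n * π + |l| * (K * n) := by gcongr
      _ = (π + |l| * K) * n := by ring
  calc (scalingParameter n t)⁻¹ * (|a| ^ 3 + |a| ^ 4 * |n * π - l * t|)
      ≤ (scalingParameter n t)⁻¹ * (scalingParameter n t ^ 3 +
          scalingParameter n t ^ 4 * ((π + |l| * K) * n)) := by gcongr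
    _ = scalingParameter n t ^ 2 + (π + |l| * K) * (scalingParameter n t ^ 3 * n) := by
        field_simp
    _ ≤ t / n + (π + |l| * K) * (t ^ (3 / 2 : ℝ) / √n) := by
        gcongr
        · exact scalingParameter_sq_le n ht.le
        · exact scalingParameter_cube_mul_le n ht.le

lemma abs_scalingParameter_mul_le {v : ℝ} (n : ℕ) (t : ℝ) (hv : |v| ≤ 1) :
    |scalingParameter n t * v| ≤ scalingParameter n t := by
  have hΓ : 0 ≤ scalingParameter n t := Real.sqrt_nonneg _
  rw [abs_mul, abs_of_nonneg hΓ]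
  exact mul_le_of_le_one_right hΓ hv

lemma abs_renormalizedTrajectory_sub_le_of_sin_le {l C K v : ℝ} {x : ℝ → ℝ → ℝ} (hC : 0 ≤ C)
    (hn : 0 < n) (ht : 0 < t) (htK : t ≤ K * n) (hv : |v| ≤ 1)
    (hsin : ∀ s, |x (scalingParameter n t * v) s - scalingParameter n t * v *
        sin (quarticFrequency l ((scalingParameter n t * v) ^ 2) * s)| ≤
      C * (|scalingParameter n t * v| ^ 3 + |scalingParameter n t * v| ^ 4 * |s|)) :
    |renormalizedTrajectory l x n v t - asymptoticTrajectory l v t| ≤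
      (C * (1 + (π + |l| * K)) + l ^ 2) * (t / n + t ^ 2 / n + t ^ (3 / 2 : ℝ) / √n) := by
  have hK : 0 ≤ K := nonneg_of_mul_nonneg_left (ht.le.trans htK) (by positivity)
  have hΓ := scalingParameter_pos hn ht
  have hcubic := inv_scalingParameter_mul_cubic_le (l := l) hn ht htK
    (abs_scalingParameter_mul_le n t hv)
  set M := π + |l| * K
  set p := t / n
  set q := t ^ 2 / n
  set w := t ^ (3 / 2 : ℝ) / √n
  have : 0 ≤ M := by positivity
  calc |renormalizedTrajectory l x n v t - asymptoticTrajectory l v t|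
      ≤ (scalingParameter n t)⁻¹ * (C * (|scalingParameter n t * v| ^ 3 +
          |scalingParameter n t * v| ^ 4 * |n * π - l * t|)) + l ^ 2 * q :=
        (abs_renormalizedTrajectory_sub_le l x hn ht hv).trans (by gcongr; exact hsin _)
    _ ≤ C * (p + M * w) + l ^ 2 * q := by
        rw [mul_left_comm]
        gcongr
    _ ≤ (C * (1 + M) + l ^ 2) * (p + q + w) := by
        have hspare : 0 ≤ C * (M * p + (1 + M) * q + w) + l ^ 2 * (p + w) := by positivity
        linarith

end Renormalization

section PerturbedQuartic

variable {V f : ℝ → ℝ} {l : ℝ}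

lemma PerturbedQuartic.hasDerivAt (hV : PerturbedQuartic V f l) (x : ℝ) :
    HasDerivAt V (x + l * x ^ 3 + deriv f x) x := by
  obtain ⟨-, hf, hVf, -⟩ := hV
  have hquad := (hasDerivAt_pow 2 x).div_const 2
  have hquart := ((hasDerivAt_pow 4 x).const_mul l).div_const 4
  have hfx := (hf.differentiable (by norm_num) x).hasDerivAt
  rw [funext hVf]
  refine ((hquad.add hquart).add hfx).congr_deriv ?_
  norm_num
  ring

lemma PerturbedQuartic.deriv_sub_isBigO (hV : PerturbedQuartic V f l) :
    (fun x ↦ deriv V x - x - l * x ^ 3) =O[𝓝 0] fun x ↦ x ^ 4 := by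
  have hf : deriv f =O[𝓝 0] fun x ↦ x ^ 4 := by
    simpa only [iteratedDeriv_one, ← abs_pow, isBigO_abs_right] using hV.2.2.2 1 (by norm_num)
  refine hf.congr_left fun x ↦ ?_
  rw [(hV.hasDerivAt x).deriv]
  ring

end PerturbedQuartic

theorem statement1_general {V : ℝ → ℝ} {l : ℝ} (hV : Differentiable ℝ V)
    (hF : (fun x ↦ deriv V x - x - l * x ^ 3) =O[𝓝 0] fun x ↦ x ^ 4)
    {v₀ : ℝ} (hv₀ : 0 < v₀) {x : ℝ → ℝ → ℝ} (hx : SolutionFamily V x v₀) :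
    ∃ K > (0 : ℝ), ∃ C > (0 : ℝ), ∀ n : ℕ, ∀ t ∈ Set.Ioc (0 : ℝ) (K * n), ∀ v ∈ Set.Icc (-1 : ℝ) 1,
      |scalingParameter n t * v| ≤ v₀ ∧
      |renormalizedTrajectory l x n v t - asymptoticTrajectory l v t| ≤
        C * (t / n + t ^ 2 / n + t ^ (3 / 2 : ℝ) / √n) := by
  obtain ⟨C, hC, hsin⟩ := hx.exists_eventually_abs_sub_sin_le hv₀ hV hF
  obtain ⟨r, hr, hball⟩ := Metric.nhds_basis_closedBall.eventually_iff.1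
    (hsin.and (Metric.closedBall_mem_nhds 0 hv₀))
  refine ⟨r ^ 2, by positivity, C * (1 + (π + |l| * r ^ 2)) + l ^ 2, by positivity, ?_⟩
  rintro n t ⟨ht, htK⟩ v hv
  have hn : 0 < n := Nat.pos_of_ne_zero fun h ↦ by simp [h] at htK; linarith
  have hv : |v| ≤ 1 := abs_le.2 hv
  have hΓr : scalingParameter n t ≤ r := le_of_sq_le_sq
    ((scalingParameter_sq_le n ht.le).trans ((div_le_iff₀ (by positivity)).2 htK)) hr.le
  obtain ⟨hsin_at, hwell⟩ := hball
    (mem_closedBall_zero_iff.2 ((abs_scalingParameter_mul_le n t hv).trans hΓr))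
  exact ⟨mem_closedBall_zero_iff.1 hwell,
    abs_renormalizedTrajectory_sub_le_of_sin_le hC.le hn ht htK hv hsin_at⟩

end

/-- the `n`-renormalized trajectories
`x_n(v;t) = (-1)ⁿ Γ_{n,t}⁻¹ x(Γ_{n,t}v; nπ - ℓt)` converge to the asymptotic
trajectories `X_ℓ(v;t) = v sin(ℓt(v²-1))` with the stated rate. -/
theorem statement1 (V f : ℝ → ℝ) (l : ℝ) (hV : PerturbedQuartic V f l)
    (v₀ : ℝ) (hv₀ : 0 < v₀) (x : ℝ → ℝ → ℝ) (hx : SolutionFamily V x v₀) :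
    ∃ K > (0 : ℝ), ∃ C > (0 : ℝ), ∃ N : ℕ, 1 ≤ N ∧
      ∀ n : ℕ, N ≤ n → ∀ t ∈ Set.Ioc (0 : ℝ) (K * (n : ℝ)), ∀ v ∈ Set.Icc (-1 : ℝ) 1,
        -- `x_n(v;t)` is well defined:
        |Real.sqrt (8 * t / (3 * Real.pi * (n : ℝ))) * v| ≤ v₀ ∧
        |(-1 : ℝ) ^ n * (Real.sqrt (8 * t / (3 * Real.pi * (n : ℝ))))⁻¹ *
            x (Real.sqrt (8 * t / (3 * Real.pi * (n : ℝ))) * v) ((n : ℝ) * Real.pi - l * t) -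
          v * Real.sin (l * t * (v ^ 2 - 1))|
          ≤ C * (t / (n : ℝ) + t ^ 2 / (n : ℝ) + t ^ ((3 : ℝ) / 2) / Real.sqrt (n : ℝ)) := by
  have hdiff : Differentiable ℝ V := fun y ↦ (hV.hasDerivAt y).differentiableAt
  obtain ⟨K, hK, C, hC, h⟩ := statement1_general hdiff hV.deriv_sub_isBigO hv₀ hx
  exact ⟨K, hK, C, hC, 1, le_rfl, fun n _ ↦ h n⟩
end

section
/- Fix ℓ ∈ {−1,1} and T > 0. There exist δ₁ > 0, δ₂ > 0, δ₃ > 0 and K > 0 with the following properties. For every |v| < δ₁ and every C² function ε : [−δ₂, δ₂] → ℝ with ε(0) = 0 and C²-norm less than δ₃, the ordinary differential equation ẍ + x + ℓx³ + ε(x) = 0 has a unique C² solution x_ε(v;·) on [0,T] with x_ε(v;0) = 0, ẋ_ε(v;0) = v and |x_ε(v;t)| ≤ δ₂ for all t ∈ [0,T]. Moreover, the map ε ↦ x_ε(v;·) from such perturbations to C²([0,T]) is Fréchet differentiable, and its derivative at ε satisfies, for every C² perturbation direction α, the bound ‖(δx_ε/δε)·α‖_{C²([0,T])} ≤ K ·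 sup_{t ∈ [0,T]} |α(x_ε(v;t))|. -/
open Real

/-- The C²-norm of `g` over the set `s`: the sup of `|g|, |g'|, |g''|` on `s`. -/
noncomputable def C2Norm (g : ℝ → ℝ) (s : Set ℝ) : ℝ :=
  sSup ((fun t => max |g t| (max |deriv g t| |deriv (deriv g) t|)) '' s)

/-- An admissible perturbation: a C² function `ε` with `ε(0) = 0` whose C²-norm
on `[-δ₂,δ₂]` is less than `δ₃`. -/
def AdmissiblePerturbation (δ₂ δ₃ : ℝ) (e : ℝ → ℝ) : Prop :=
  ContDiff ℝ 2 e ∧ e 0 = 0 ∧ C2Norm e (Set.Icc (-δ₂) δ₂) < δ₃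

/-- `y` is a C² solution of `ẍ + x + ℓx³ + ε(x) = 0` on `[0,T]` with `y(0) = 0`,
`ẏ(0) = v` and `|y| ≤ δ₂` on `[0,T]`. -/
def IsPerturbedSolution (l : ℝ) (e : ℝ → ℝ) (v δ₂ T : ℝ) (y : ℝ → ℝ) : Prop :=
  ContDiff ℝ 2 y ∧ y 0 = 0 ∧ deriv y 0 = v ∧
  ∀ t ∈ Set.Icc (0 : ℝ) T, |y t| ≤ δ₂ ∧
    deriv (deriv y) t + y t + l * y t ^ 3 + e (y t) = 0

/-!
For `|x| ≤ R` the force `φ = f + ε` is `K`-Lipschitz, with `K` depending only on the size of `f` and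
`ε` in `C²`. A Lipschitz extension of `φ` to the line has a solution on all of `[0,T]`, by Picard
iteration in an exponentially weighted norm. Grönwall's inequality bounds it by `|v| exp (KT)`, so
for small `v` it stays in `[-R,R]` and solves the original equation; the same inequality gives
uniqueness and shows that perturbing `ε` by `α` moves the solution by at most `‖α‖ exp (KT)`.

The derivative in the direction `α` is the solution `h` of the linearised equation
`ḧ + φ'(x) h = -α(x)` with zero initial data, again estimated by Grönwall. If `z` is the solution
for `ε + α`, then `z - x - h` solves the linearised equation with forcing term minus
`[φ(z) - φ(x) - φ'(x)(z - x)] + [α(z) - α(x)]`, which is quadratic in `‖α‖`.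
-/

open Set
open scoped NNReal

section SecondOrderEquation

variable {E : Type*} [NormedAddCommGroup E] [NormedSpace ℝ E]

lemma deriv_deriv_add {f g : ℝ → E} (hf : ContDiff ℝ 2 f) (hg : ContDiff ℝ 2 g) :
    deriv (deriv (f + g)) = deriv (deriv f) + deriv (deriv g) := by
  ext t
  simpa only [iteratedDeriv_succ, iteratedDeriv_zero, Pi.add_apply] using
    iteratedDeriv_add (n := 2) hf.contDiffAt hg.contDiffAt (x := t)

lemma deriv_deriv_sub {f g : ℝ → E} (hf : ContDiff ℝ 2 f) (hg : ContDiff ℝ 2 g) :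
    deriv (deriv (f - g)) = deriv (deriv f) - deriv (deriv g) := by
  ext t
  simpa only [iteratedDeriv_succ, iteratedDeriv_zero, Pi.sub_apply] using
    iteratedDeriv_sub (n := 2) hf.contDiffAt hg.contDiffAt (x := t)

lemma deriv_deriv_const_smul {f : ℝ → E} (c : ℝ) (hf : ContDiff ℝ 2 f) :
    deriv (deriv (c • f)) = c • deriv (deriv f) := by
  ext t
  simpa only [iteratedDeriv_succ, iteratedDeriv_zero, Pi.smul_apply] using
    iteratedDeriv_const_smul (n := 2) hf.contDiffAt c (x := t)

lemma gronwallBound_le_mul_exp {δ ε K x : ℝ} (hε : 0 ≤ ε) (hK : 1 ≤ K) :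
    gronwallBound δ K ε x ≤ (δ + ε) * exp (K * x) := by
  have hdiv : ε / K ≤ ε := div_le_self hε hK
  have hdiv_nonneg : 0 ≤ ε / K := by positivity
  rw [gronwallBound_of_K_ne_0 (by positivity)]
  nlinarith [exp_pos (K * x)]

theorem norm_le_and_norm_deriv_le_of_norm_deriv_deriv_le {T K a d : ℝ} {y : ℝ → E}
    (hK : 1 ≤ K) (hd : 0 ≤ d) (hy : ContDiff ℝ 2 y) (h₀ : ‖y 0‖ ≤ a) (h₁ : ‖deriv y 0‖ ≤ a)
    (hy'' : ∀ t ∈ Icc 0 T, ‖deriv (deriv y) t‖ ≤ K * ‖y t‖ + d) {t : ℝ} (ht : t ∈ Icc 0 T) :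
    ‖y t‖ ≤ (a + d) * exp (K * T) ∧ ‖deriv y t‖ ≤ (a + d) * exp (K * T) := by
  have hy₁ : Differentiable ℝ y := hy.differentiable two_ne_zero
  have hy₂ : Differentiable ℝ (deriv y) := hy.differentiable_deriv_two
  have growth : ∀ s ∈ Ico 0 T,
      ‖(deriv y s, deriv (deriv y) s)‖ ≤ K * ‖(y s, deriv y s)‖ + d := by
    intro s hs
    have hys : ‖y s‖ ≤ ‖(y s, deriv y s)‖ := norm_fst_le (y s, deriv y s)
    have hys' : ‖deriv y s‖ ≤ ‖(y s, deriv y s)‖ := norm_snd_le (y s, deriv y s)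
    refine norm_prod_le_iff.2 ⟨?_, (hy'' s ⟨hs.1, hs.2.le⟩).trans (by gcongr)⟩
    nlinarith [norm_nonneg (y s, deriv y s)]
  have bound := norm_le_gronwallBound_of_norm_deriv_right_le (f := fun s => (y s, deriv y s))
    (hy₁.continuous.prodMk hy₂.continuous).continuousOn
    (fun s _ => ((hy₁ s).hasDerivAt.prodMk (hy₂ s).hasDerivAt).hasDerivWithinAt)
    (norm_prod_le_iff.2 ⟨h₀, h₁⟩) growth t ht
  have had : 0 ≤ a + d := add_nonneg ((norm_nonneg _).trans h₀) hd
  rw [← norm_prod_le_iff (x := (y t, deriv y t))]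
  calc ‖(y t, deriv y t)‖ ≤ gronwallBound a K d (t - 0) := bound
    _ ≤ (a + d) * exp (K * (t - 0)) := gronwallBound_le_mul_exp hd hK
    _ ≤ (a + d) * exp (K * T) := by gcongr; linarith [ht.2]

lemma norm_integral_le_mul_exp_of_norm_le {h : ℝ → E} {C k t : ℝ} (hC : 0 ≤ C) (hk : 0 < k)
    (ht : 0 ≤ t) (hh : ∀ s ∈ Icc 0 t, ‖h s‖ ≤ C * exp (k * s)) :
    ‖∫ s in 0..t, h s‖ ≤ C / k * exp (k * t) := by
  calc ‖∫ s in 0..t, h s‖ ≤ ∫ s in 0..t, C * exp (k * s) :=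
        intervalIntegral.norm_integral_le_of_norm_le ht
          (.of_forall fun s hs => hh s (Ioc_subset_Icc_self hs))
          (Continuous.intervalIntegrable (by fun_prop) _ _)
    _ = C / k * (exp (k * t) - 1) := by simp [hk.ne']; ring
    _ ≤ C / k * exp (k * t) := by gcongr; linarith

/-- The function with second derivative `g`, value `0` and velocity `v` at time `0`. -/
noncomputable def trajectory (v : E) (g : ℝ → E) (t : ℝ) : E :=
  ∫ s in 0..t, (v + ∫ r in 0..s, g r)

lemma norm_trajectory_sub_le {v : E} {g₁ g₂ : ℝ → E} (hg₁ : Continuous g₁) (hg₂ : Continuous g₂)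
    {C k t : ℝ} (hC : 0 ≤ C) (hk : 0 < k) (ht : 0 ≤ t)
    (h : ∀ s ∈ Icc 0 t, ‖g₁ s - g₂ s‖ ≤ C * exp (k * s)) :
    ‖trajectory v g₁ t - trajectory v g₂ t‖ ≤ C / k / k * exp (k * t) := by
  have hv₁ : Continuous fun s => v + ∫ r in 0..s, g₁ r :=
    continuous_const.add (intervalIntegral.continuous_primitive hg₁.intervalIntegrable 0)
  have hv₂ : Continuous fun s => v + ∫ r in 0..s, g₂ r :=
    continuous_const.add (intervalIntegral.continuous_primitive hg₂.intervalIntegrable 0)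
  rw [trajectory, trajectory, ← intervalIntegral.integral_sub (hv₁.intervalIntegrable _ _)
    (hv₂.intervalIntegrable _ _)]
  refine norm_integral_le_mul_exp_of_norm_le (by positivity) hk ht fun s hs => ?_
  rw [add_sub_add_left_eq_sub, ← intervalIntegral.integral_sub (hg₁.intervalIntegrable _ _)
    (hg₂.intervalIntegrable _ _)]
  exact norm_integral_le_mul_exp_of_norm_le hC hk hs.1 fun r hr => h r ⟨hr.1, hr.2.trans hs.2⟩

variable [CompleteSpace E]

lemma deriv_trajectory (v : E) {g : ℝ → E} (hg : Continuous g) :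
    deriv (trajectory v g) = fun t => v + ∫ s in 0..t, g s := by
  ext t
  exact Continuous.deriv_integral _
    (continuous_const.add (intervalIntegral.continuous_primitive hg.intervalIntegrable 0)) 0 t

lemma deriv_deriv_trajectory (v : E) {g : ℝ → E} (hg : Continuous g) :
    deriv (deriv (trajectory v g)) = g := by
  ext t
  rw [deriv_trajectory v hg, deriv_const_add, hg.deriv_integral]

lemma contDiff_trajectory (v : E) {g : ℝ → E} (hg : Continuous g) :
    ContDiff ℝ 2 (trajectory v g) := by
  have hv : Continuous fun t => v + ∫ s in 0..t, g s :=
    continuous_const.add (intervalIntegral.continuous_primitive hg.intervalIntegrable 0)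
  rw [← one_add_one_eq_two, contDiff_succ_iff_deriv, contDiff_one_iff_deriv,
    deriv_deriv_trajectory v hg, deriv_trajectory v hg]
  exact ⟨fun t => (hv.integral_hasStrictDerivAt 0 t).hasDerivAt.differentiableAt, by simp,
    fun t => ((hg.integral_hasStrictDerivAt 0 t).hasDerivAt.const_add v).differentiableAt, hg⟩

/-- The Picard operator of `ÿ = G(t, y)`, acting on the second derivative of `y` divided by the
Bielecki weight `exp (k t)`; for large `k` the weight makes it a contraction on all of `[0,T]`. -/
noncomputable def weightedPicard {T : ℝ} (hT : 0 ≤ T) {G : ℝ → E → E}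
    (hG : Continuous (Function.uncurry G)) (v : E) (k : ℝ) (u : C(Icc 0 T, E)) :
    C(Icc 0 T, E) where
  toFun t := exp (-(k * t)) •
    G t (trajectory v (fun s => exp (k * s) • IccExtend hT u s) t)
  continuous_toFun := by
    have hg : Continuous fun s => exp (k * s) • IccExtend hT u s :=
      (by fun_prop : Continuous fun s : ℝ => exp (k * s)).smul u.continuous.Icc_extend'
    have := (contDiff_trajectory v hg).continuous
    have : Continuous fun t : ℝ => G t (trajectory v (fun s => exp (k * s) • IccExtend hT u s) t) :=
      hG.comp (continuous_id.prodMk this)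
    fun_prop

lemma contractingWith_weightedPicard {T : ℝ} (hT : 0 ≤ T) {G : ℝ → E → E}
    (hG : Continuous (Function.uncurry G)) {K : ℝ≥0} (hK : ∀ t ∈ Icc 0 T, LipschitzWith K (G t))
    (v : E) : ContractingWith (K / (K + 1) / (K + 1)) (weightedPicard hT hG v (K + 1)) := by
  refine ⟨?_, LipschitzWith.of_dist_le_mul fun u w => ?_⟩
  · rw [div_lt_one (by positivity)]
    exact (div_lt_one (by positivity)).2 (lt_add_one K) |>.trans_le le_add_self
  refine (ContinuousMap.dist_le (by positivity)).2 fun t => ?_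
  have hk : (0 : ℝ) < K + 1 := by positivity
  let g (u : C(Icc 0 T, E)) (s : ℝ) : E := exp ((K + 1) * s) • IccExtend hT u s
  have hg (u : C(Icc 0 T, E)) : Continuous (g u) := by
    have : Continuous (IccExtend hT u) := u.continuous.Icc_extend'
    fun_prop
  have hgsub (s : ℝ) : ‖g u s - g w s‖ ≤ dist u w * exp ((K + 1) * s) := by
    rw [← smul_sub, norm_smul, Real.norm_of_nonneg (exp_pos _).le, mul_comm, ← dist_eq_norm]
    gcongr
    exact ContinuousMap.dist_apply_le_dist _
  calc dist (weightedPicard hT hG v (K + 1) u t) (weightedPicard hT hG v (K + 1) w t)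
      = exp (-((K + 1) * t)) * dist (G t (trajectory v (g u) t)) (G t (trajectory v (g w) t)) := by
        rw [← Real.norm_of_nonneg (exp_pos (-((K + 1) * (t : ℝ)))).le, ← dist_smul₀]; rfl
    _ ≤ exp (-((K + 1) * t)) * (K * dist (trajectory v (g u) t) (trajectory v (g w) t)) := by
        gcongr; exact (hK t t.2).dist_le_mul _ _
    _ ≤ exp (-((K + 1) * t)) *
          (K * (dist u w / (K + 1) / (K + 1) * exp ((K + 1) * t))) := by
        rw [dist_eq_norm (trajectory v (g u) t)]
        gcongr
        exact norm_trajectory_sub_le (hg u) (hg w) dist_nonneg hk t.2.1 fun s _ => hgsub s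
    _ = (K / (K + 1) / (K + 1) : ℝ≥0) * dist u w := by
        rw [exp_neg]; push_cast; field_simp

theorem exists_deriv_deriv_eq_of_lipschitzWith {T : ℝ} (hT : 0 ≤ T) {G : ℝ → E → E}
    (hG : Continuous (Function.uncurry G)) {K : ℝ≥0} (hK : ∀ t ∈ Icc 0 T, LipschitzWith K (G t))
    (v : E) :
    ∃ y : ℝ → E, ContDiff ℝ 2 y ∧ y 0 = 0 ∧ deriv y 0 = v ∧
      ∀ t ∈ Icc 0 T, deriv (deriv y) t = G t (y t) := by
  have contraction := contractingWith_weightedPicard hT hG hK v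
  let u := ContractingWith.fixedPoint _ contraction
  let g : ℝ → E := fun s => exp ((K + 1) * s) • IccExtend hT u s
  have hg : Continuous g := by
    have : Continuous (IccExtend hT u) := u.continuous.Icc_extend'
    fun_prop
  refine ⟨trajectory v g, contDiff_trajectory v hg, by simp [trajectory],
    by simp [deriv_trajectory v hg], fun t ht => ?_⟩
  have fixed : u ⟨t, ht⟩ = exp (-((K + 1) * t)) • G t (trajectory v g t) :=
    congrArg (· ⟨t, ht⟩) contraction.fixedPoint_isFixedPt.symm
  calc deriv (deriv (trajectory v g)) t = exp ((K + 1) * t) • u ⟨t, ht⟩ := by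
        rw [deriv_deriv_trajectory v hg]
        exact congrArg _ (IccExtend_of_mem hT u ht)
    _ = G t (trajectory v g t) := by
        rw [fixed, smul_smul, ← exp_add, add_neg_cancel, exp_zero, one_smul]

end SecondOrderEquation

section C2NormEstimates

lemma C2Norm_nonneg (g : ℝ → ℝ) (s : Set ℝ) : 0 ≤ C2Norm g s :=
  Real.sSup_nonneg <| by rintro _ ⟨t, -, rfl⟩; positivity

lemma C2Norm_le {g : ℝ → ℝ} {s : Set ℝ} {B : ℝ} (hB : 0 ≤ B)
    (h : ∀ t ∈ s, |g t| ≤ B ∧ |deriv g t| ≤ B ∧ |deriv (deriv g) t| ≤ B) : C2Norm g s ≤ B :=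
  Real.sSup_le (by
    rintro _ ⟨t, ht, rfl⟩
    obtain ⟨h₀, h₁, h₂⟩ := h t ht
    exact max_le h₀ (max_le h₁ h₂)) hB

variable {g : ℝ → ℝ} {s : Set ℝ} {t : ℝ}

lemma max_abs_le_C2Norm (hs : IsCompact s) (hg : ContDiff ℝ 2 g) (ht : t ∈ s) :
    max |g t| (max |deriv g t| |deriv (deriv g) t|) ≤ C2Norm g s := by
  have hg₀ : Continuous g := hg.continuous
  have hg₁ : Continuous (deriv g) := hg.continuous_deriv one_le_two
  have : Continuous (deriv (deriv g)) :=
    ContDiff.continuous_deriv (n := 1) (hg.deriv' (n := 1)) le_rfl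
  exact le_csSup (hs.bddAbove_image (by fun_prop)) (mem_image_of_mem _ ht)

lemma abs_le_C2Norm (hs : IsCompact s) (hg : ContDiff ℝ 2 g) (ht : t ∈ s) :
    |g t| ≤ C2Norm g s :=
  (le_max_left _ _).trans (max_abs_le_C2Norm hs hg ht)

lemma abs_deriv_le_C2Norm (hs : IsCompact s) (hg : ContDiff ℝ 2 g) (ht : t ∈ s) :
    |deriv g t| ≤ C2Norm g s :=
  (le_max_left _ _).trans <| (le_max_right _ _).trans (max_abs_le_C2Norm hs hg ht)

lemma abs_deriv_deriv_le_C2Norm (hs : IsCompact s) (hg : ContDiff ℝ 2 g) (ht : t ∈ s) :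
    |deriv (deriv g) t| ≤ C2Norm g s :=
  (le_max_right _ _).trans <| (le_max_right _ _).trans (max_abs_le_C2Norm hs hg ht)

lemma C2Norm_add_le {f : ℝ → ℝ} (hs : IsCompact s) (hf : ContDiff ℝ 2 f) (hg : ContDiff ℝ 2 g) :
    C2Norm (f + g) s ≤ C2Norm f s + C2Norm g s := by
  refine C2Norm_le (add_nonneg (C2Norm_nonneg _ _) (C2Norm_nonneg _ _)) fun t ht => ⟨?_, ?_, ?_⟩
  · exact (abs_add_le _ _).trans
      (add_le_add (abs_le_C2Norm hs hf ht) (abs_le_C2Norm hs hg ht))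
  · rw [deriv_add (hf.differentiable two_ne_zero t) (hg.differentiable two_ne_zero t)]
    exact (abs_add_le _ _).trans
      (add_le_add (abs_deriv_le_C2Norm hs hf ht) (abs_deriv_le_C2Norm hs hg ht))
  · rw [deriv_deriv_add hf hg]
    exact (abs_add_le _ _).trans
      (add_le_add (abs_deriv_deriv_le_C2Norm hs hf ht) (abs_deriv_deriv_le_C2Norm hs hg ht))

lemma AdmissiblePerturbation.C2Norm_add_le {f e : ℝ → ℝ} {R δ : ℝ}
    (he : AdmissiblePerturbation R δ e) (hf : ContDiff ℝ 2 f) :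
    C2Norm (f + e) (Icc (-R) R) ≤ C2Norm f (Icc (-R) R) + δ :=
  (_root_.C2Norm_add_le isCompact_Icc hf he.1).trans (by gcongr; exact he.2.2.le)

lemma abs_sub_le_C2Norm_mul (hs : IsCompact s) (hconv : Convex ℝ s) (hg : ContDiff ℝ 2 g)
    {x z : ℝ} (hx : x ∈ s) (hz : z ∈ s) : |g z - g x| ≤ C2Norm g s * |z - x| :=
  hconv.norm_image_sub_le_of_norm_deriv_le (fun _ _ => hg.differentiable two_ne_zero _)
    (fun _ ht => abs_deriv_le_C2Norm hs hg ht) hx hz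

lemma abs_taylor_remainder_le_C2Norm_mul_sq (hs : IsCompact s) (hconv : Convex ℝ s)
    (hg : ContDiff ℝ 2 g) {x z : ℝ} (hx : x ∈ s) (hz : z ∈ s) :
    |g z - g x - deriv g x * (z - x)| ≤ C2Norm g s * |z - x| ^ 2 := by
  have hsub : uIcc x z ⊆ s := by
    rw [← segment_eq_uIcc]; exact hconv.segment_subset hx hz
  have hderiv (r : ℝ) : HasDerivAt (fun r => g r - deriv g x * r) (deriv g r - deriv g x) r := by
    simpa using (hg.differentiable two_ne_zero r).hasDerivAt.fun_sub
      ((hasDerivAt_id r).const_mul (deriv g x))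
  have deriv_bound : ∀ r ∈ uIcc x z, ‖deriv g r - deriv g x‖ ≤ C2Norm g s * |z - x| := by
    intro r hr
    calc ‖deriv g r - deriv g x‖ ≤ C2Norm g s * ‖r - x‖ :=
          hconv.norm_image_sub_le_of_norm_deriv_le (fun _ _ => hg.differentiable_deriv_two _)
            (fun _ ht => abs_deriv_deriv_le_C2Norm hs hg ht) hx (hsub hr)
      _ ≤ C2Norm g s * |z - x| := by
          gcongr
          · exact C2Norm_nonneg g s
          · exact abs_sub_left_of_mem_uIcc hr
  calc |g z - g x - deriv g x * (z - x)|
      = ‖(g z - deriv g x * z) - (g x - deriv g x * x)‖ := by rw [Real.norm_eq_abs]; ring_nf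
    _ ≤ C2Norm g s * |z - x| * ‖z - x‖ :=
        (convex_uIcc x z).norm_image_sub_le_of_norm_hasDerivWithin_le
          (fun r _ => (hderiv r).hasDerivWithinAt) deriv_bound left_mem_uIcc right_mem_uIcc
    _ = C2Norm g s * |z - x| ^ 2 := by rw [Real.norm_eq_abs]; ring

lemma lipschitzOnWith_of_C2Norm_le {K : ℝ≥0} (hs : IsCompact s) (hconv : Convex ℝ s)
    (hg : ContDiff ℝ 2 g) (hK : C2Norm g s ≤ K) : LipschitzOnWith K g s :=
  LipschitzOnWith.of_dist_le_mul fun z hz x hx =>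
    (abs_sub_le_C2Norm_mul hs hconv hg hx hz).trans (by rw [Real.dist_eq]; gcongr)

lemma C2Norm_le_of_abs_deriv_deriv_le {T K d : ℝ} {y : ℝ → ℝ} (hK : 1 ≤ K) (hd : 0 ≤ d)
    (hy : ContDiff ℝ 2 y) (h₀ : y 0 = 0) (h₁ : deriv y 0 = 0)
    (hy'' : ∀ t ∈ Icc 0 T, |deriv (deriv y) t| ≤ K * |y t| + d) :
    C2Norm y (Icc 0 T) ≤ (K * exp (K * T) + 1) * d := by
  have : 0 ≤ K := zero_le_one.trans hK
  have hdE : d * exp (K * T) ≤ K * (d * exp (K * T)) := le_mul_of_one_le_left (by positivity) hK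
  refine C2Norm_le (by positivity) fun t ht => ?_
  obtain ⟨hyt, hyt'⟩ := norm_le_and_norm_deriv_le_of_norm_deriv_deriv_le (a := 0) hK hd hy
    (by simp [h₀]) (by simp [h₁]) hy'' ht
  rw [Real.norm_eq_abs, zero_add] at hyt hyt'
  have hyt'' : |deriv (deriv y) t| ≤ K * (d * exp (K * T)) + d :=
    (hy'' t ht).trans (by gcongr)
  refine ⟨?_, ?_, ?_⟩ <;> linarith

end C2NormEstimates

section Oscillations

/-- `y` is a `C²` solution on `[0,T]` of `ÿ + φ(y) = 0` issuing from `0` with velocity `v` and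
staying in `[-R,R]`. As in `IsPerturbedSolution`, `y` is a function on all of `ℝ`. -/
def IsOscillation (φ : ℝ → ℝ) (v R T : ℝ) (y : ℝ → ℝ) : Prop :=
  ContDiff ℝ 2 y ∧ y 0 = 0 ∧ deriv y 0 = v ∧
  ∀ t ∈ Icc (0 : ℝ) T, |y t| ≤ R ∧ deriv (deriv y) t + φ (y t) = 0

lemma isPerturbedSolution_iff_isOscillation {l v R T : ℝ} {e y : ℝ → ℝ} :
    IsPerturbedSolution l e v R T y ↔ IsOscillation ((fun x => x + l * x ^ 3) + e) v R T y := by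
  simp only [IsPerturbedSolution, IsOscillation, Pi.add_apply, add_assoc]

variable {φ : ℝ → ℝ} {v R T : ℝ} {K : ℝ≥0}

theorem exists_isOscillation (hT : 0 ≤ T) (hK : 1 ≤ K) (hφ : LipschitzOnWith K φ (Icc (-R) R))
    (hφ₀ : φ 0 = 0) (hv : |v| ≤ R * exp (-(K * T))) : ∃ y, IsOscillation φ v R T y := by
  have hR : 0 ≤ R := nonneg_of_mul_nonneg_left ((abs_nonneg v).trans hv) (exp_pos _)
  obtain ⟨ψ, hψ, hφψ⟩ := hφ.extend_real
  have hψ₀ : ψ 0 = 0 := (hφψ ⟨by simpa, hR⟩).symm.trans hφ₀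
  obtain ⟨y, hy, hy₀, hy₁, hode⟩ := exists_deriv_deriv_eq_of_lipschitzWith hT
    (G := fun _ x => -ψ x) (hψ.continuous.comp continuous_snd).neg (fun _ _ => hψ.neg) v
  have growth : ∀ t ∈ Icc 0 T, ‖deriv (deriv y) t‖ ≤ K * ‖y t‖ + 0 := fun t ht => by
    simpa [hode t ht, hψ₀] using hψ.norm_sub_le (y t) 0
  have hyR : ∀ t ∈ Icc 0 T, |y t| ≤ R := fun t ht =>
    calc |y t| ≤ (|v| + 0) * exp (K * T) :=
          (norm_le_and_norm_deriv_le_of_norm_deriv_deriv_le (mod_cast hK) le_rfl hy (by simp [hy₀])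
            (by simp [hy₁]) growth ht).1
      _ ≤ R * exp (-(K * T)) * exp (K * T) := by rw [add_zero]; gcongr
      _ = R := by rw [mul_assoc, ← exp_add, neg_add_cancel, exp_zero, mul_one]
  refine ⟨y, hy, hy₀, hy₁, fun t ht => ⟨hyR t ht, ?_⟩⟩
  rw [hode t ht, hφψ (abs_le.1 (hyR t ht)), neg_add_cancel]

end Oscillations

section Linearization

/-- `h` is a `C²` solution on `[0,T]` of the linear equation `ḧ + q h = b` with zero initial
data. -/
def IsForcedResponse (q : ℝ → ℝ) (T : ℝ) (b h : ℝ → ℝ) : Prop :=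
  ContDiff ℝ 2 h ∧ h 0 = 0 ∧ deriv h 0 = 0 ∧
  ∀ t ∈ Icc (0 : ℝ) T, deriv (deriv h) t + q t * h t = b t

lemma IsForcedResponse.add {q b c h k : ℝ → ℝ} {T : ℝ} (hh : IsForcedResponse q T b h)
    (hk : IsForcedResponse q T c k) : IsForcedResponse q T (b + c) (h + k) := by
  obtain ⟨hh₂, hh₀, hh₁, hht⟩ := hh
  obtain ⟨hk₂, hk₀, hk₁, hkt⟩ := hk
  refine ⟨hh₂.add hk₂, by simp [hh₀, hk₀], ?_, fun t ht => ?_⟩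
  · rw [deriv_add (hh₂.differentiable two_ne_zero 0) (hk₂.differentiable two_ne_zero 0), hh₁, hk₁,
      add_zero]
  · rw [deriv_deriv_add hh₂ hk₂]
    simp only [Pi.add_apply, ← hht t ht, ← hkt t ht]
    ring

lemma IsForcedResponse.const_smul {q b h : ℝ → ℝ} {T : ℝ} (hh : IsForcedResponse q T b h) (c : ℝ) :
    IsForcedResponse q T (c • b) (c • h) := by
  obtain ⟨hh₂, hh₀, hh₁, hht⟩ := hh
  refine ⟨contDiff_const.smul hh₂, by simp [hh₀], ?_, fun t ht => ?_⟩
  · rw [deriv_const_smul c (hh₂.differentiable two_ne_zero 0), hh₁, smul_zero]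
  · rw [deriv_deriv_const_smul c hh₂]
    simp only [Pi.smul_apply, smul_eq_mul, ← hht t ht]
    ring

/-- The linear relation between forcing terms and responses. It is not the graph of a map, since
responses are determined on `[0,T]` only. -/
def forcedResponseRelation (q : ℝ → ℝ) (T : ℝ) : Submodule ℝ ((ℝ → ℝ) × (ℝ → ℝ)) where
  carrier := {p | IsForcedResponse q T p.1 p.2}
  zero_mem' := ⟨contDiff_const, rfl, deriv_const 0 _, fun t _ => by simp [Pi.zero_def]⟩
  add_mem' hp hp' := hp.add hp'
  smul_mem' c _ hp := hp.const_smul c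

lemma exists_linearMap_selection {𝕜 V W : Type*} [DivisionRing 𝕜] [AddCommGroup V] [Module 𝕜 V]
    [AddCommGroup W] [Module 𝕜 W] (S : Submodule 𝕜 (V × W)) :
    ∃ L : V →ₗ[𝕜] W, ∀ v w, (v, w) ∈ S → (v, L v) ∈ S := by
  let p : S →ₗ[𝕜] V := LinearMap.fst 𝕜 V W ∘ₗ S.subtype
  obtain ⟨σ, hσ⟩ := p.rangeRestrict.exists_rightInverse_of_surjective p.range_rangeRestrict
  obtain ⟨L, hL⟩ := (LinearMap.snd 𝕜 V W ∘ₗ S.subtype ∘ₗ σ).exists_extend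
  refine ⟨L, fun v w hvw => ?_⟩
  let r : p.range := ⟨v, ⟨(v, w), hvw⟩, rfl⟩
  have hfst : (σ r : V × W).1 = v := congrArg Subtype.val (LinearMap.congr_fun hσ r)
  have hsnd : L v = (σ r : V × W).2 := LinearMap.congr_fun hL r
  rw [hsnd, ← hfst]
  exact (σ r).2

variable {q b h : ℝ → ℝ} {T : ℝ} {K : ℝ≥0}

theorem exists_isForcedResponse (hT : 0 ≤ T) (hq : Continuous q)
    (hqK : ∀ t ∈ Icc 0 T, |q t| ≤ K) (hb : Continuous b) : ∃ h, IsForcedResponse q T b h := by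
  obtain ⟨h, hh, hh₀, hh₁, hode⟩ := exists_deriv_deriv_eq_of_lipschitzWith hT
    (G := fun t x => b t - q t * x) (K := K)
    (by simp only [Function.uncurry_def]; fun_prop)
    (fun t ht => LipschitzWith.of_dist_le_mul fun x y => by
      rw [dist_sub_left, dist_eq_norm, ← mul_sub, norm_mul, dist_eq_norm]
      gcongr
      exact hqK t ht) 0
  exact ⟨h, hh, hh₀, hh₁, fun t ht => by rw [hode t ht, sub_add_cancel]⟩

theorem exists_linearMap_isForcedResponse (hT : 0 ≤ T) (hq : Continuous q)
    (hqK : ∀ t ∈ Icc 0 T, |q t| ≤ K) :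
    ∃ S : (ℝ → ℝ) →ₗ[ℝ] (ℝ → ℝ), ∀ b, Continuous b → IsForcedResponse q T b (S b) := by
  obtain ⟨S, hS⟩ := exists_linearMap_selection (forcedResponseRelation q T)
  refine ⟨S, fun b hb => ?_⟩
  obtain ⟨h, hh⟩ := exists_isForcedResponse hT hq hqK hb
  exact hS b h hh

theorem IsForcedResponse.C2Norm_le {d : ℝ} (hh : IsForcedResponse q T b h) (hK : 1 ≤ K)
    (hqK : ∀ t ∈ Icc 0 T, |q t| ≤ K) (hd : 0 ≤ d) (hbd : ∀ t ∈ Icc 0 T, |b t| ≤ d) :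
    C2Norm h (Icc 0 T) ≤ (K * exp (K * T) + 1) * d := by
  obtain ⟨hh₂, hh₀, hh₁, hode⟩ := hh
  refine C2Norm_le_of_abs_deriv_deriv_le (mod_cast hK) hd hh₂ hh₀ hh₁ fun t ht => ?_
  calc |deriv (deriv h) t| = |-(q t * h t) + b t| := by rw [← hode t ht]; ring_nf
    _ ≤ |q t| * |h t| + |b t| := by simpa [abs_mul] using abs_add_le (-(q t * h t)) (b t)
    _ ≤ K * |h t| + d := by gcongr; exacts [hqK t ht, hbd t ht]

theorem IsForcedResponse.C2Norm_le_mul_sSup (hh : IsForcedResponse q T b h) (hK : 1 ≤ K)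
    (hqK : ∀ t ∈ Icc 0 T, |q t| ≤ K) (hb : Continuous b) :
    C2Norm h (Icc 0 T) ≤ (K * exp (K * T) + 1) * sSup ((fun t => |b t|) '' Icc 0 T) :=
  hh.C2Norm_le hK hqK (Real.sSup_nonneg <| by rintro _ ⟨t, -, rfl⟩; positivity) fun _ ht =>
    le_csSup (isCompact_Icc.bddAbove_image hb.abs.continuousOn) (mem_image_of_mem _ ht)

variable {φ ψ x z : ℝ → ℝ} {v R : ℝ}

lemma IsOscillation.sub (hx : IsOscillation φ v R T x) (hz : IsOscillation ψ v R T z)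
    (q : ℝ → ℝ) :
    IsForcedResponse q T (fun t => q t * (z t - x t) - (ψ (z t) - φ (x t))) (z - x) := by
  obtain ⟨hx₂, hx₀, hx₁, hxt⟩ := hx
  obtain ⟨hz₂, hz₀, hz₁, hzt⟩ := hz
  refine ⟨hz₂.sub hx₂, by simp [hz₀, hx₀], ?_, fun t ht => ?_⟩
  · rw [deriv_sub (hz₂.differentiable two_ne_zero 0) (hx₂.differentiable two_ne_zero 0), hz₁, hx₁,
      sub_self]
  · rw [deriv_deriv_sub hz₂ hx₂, Pi.sub_apply, Pi.sub_apply]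
    linear_combination (hzt t ht).2 - (hxt t ht).2

theorem IsOscillation.abs_sub_le {N : ℝ} (hx : IsOscillation φ v R T x)
    (hz : IsOscillation ψ v R T z) (hK : 1 ≤ K) (hφ : LipschitzOnWith K φ (Icc (-R) R))
    (hN : ∀ u ∈ Icc (-R) R, |ψ u - φ u| ≤ N) {t : ℝ} (ht : t ∈ Icc 0 T) :
    |z t - x t| ≤ N * exp (K * T) := by
  obtain ⟨hw₂, hw₀, hw₁, hode⟩ := hx.sub hz 0
  have hxR : ∀ s ∈ Icc 0 T, x s ∈ Icc (-R) R := fun s hs => abs_le.1 (hx.2.2.2 s hs).1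
  have hzR : ∀ s ∈ Icc 0 T, z s ∈ Icc (-R) R := fun s hs => abs_le.1 (hz.2.2.2 s hs).1
  have hN₀ : 0 ≤ N := (abs_nonneg _).trans (hN (z t) (hzR t ht))
  have growth : ∀ s ∈ Icc 0 T, ‖deriv (deriv (z - x)) s‖ ≤ K * ‖(z - x) s‖ + N := by
    intro s hs
    have split : deriv (deriv (z - x)) s = -((φ (z s) - φ (x s)) + (ψ (z s) - φ (z s))) := by
      have := hode s hs
      simp only [Pi.zero_apply, zero_mul, add_zero, zero_sub] at this
      linear_combination this
    rw [split, norm_neg]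
    exact norm_add_le_of_le (hφ.norm_sub_le (hzR s hs) (hxR s hs)) (hN _ (hzR s hs))
  simpa only [zero_add, Pi.sub_apply, Real.norm_eq_abs] using
    (norm_le_and_norm_deriv_le_of_norm_deriv_deriv_le (mod_cast hK) hN₀ hw₂
      (norm_eq_zero.2 hw₀).le (norm_eq_zero.2 hw₁).le growth ht).1

theorem IsOscillation.eqOn {y : ℝ → ℝ} (hx : IsOscillation φ v R T x)
    (hy : IsOscillation φ v R T y) (hK : 1 ≤ K) (hφ : LipschitzOnWith K φ (Icc (-R) R)) :
    EqOn y x (Icc 0 T) := fun t ht => by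
  have := hx.abs_sub_le hy hK hφ (N := 0) (by simp) ht
  rwa [zero_mul, abs_nonpos_iff, sub_eq_zero] at this

lemma IsOscillation.abs_deriv_comp_le (hx : IsOscillation φ v R T x) (hφ : ContDiff ℝ 2 φ)
    (hφK : C2Norm φ (Icc (-R) R) ≤ K) : ∀ t ∈ Icc 0 T, |(deriv φ ∘ x) t| ≤ K := fun t ht =>
  (abs_deriv_le_C2Norm isCompact_Icc hφ (abs_le.1 (hx.2.2.2 t ht).1)).trans hφK

theorem IsOscillation.exists_linearMap_isForcedResponse (hT : 0 ≤ T) (hφ : ContDiff ℝ 2 φ)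
    (hx : IsOscillation φ v R T x) :
    ∃ L : (ℝ → ℝ) →ₗ[ℝ] (ℝ → ℝ), ∀ α, Continuous α →
      IsForcedResponse (deriv φ ∘ x) T (-(α ∘ x)) (L α) := by
  have hq : Continuous (deriv φ ∘ x) := (hφ.continuous_deriv one_le_two).comp hx.1.continuous
  obtain ⟨S, hS⟩ := _root_.exists_linearMap_isForcedResponse hT hq
    (K := (C2Norm φ (Icc (-R) R)).toNNReal) (hx.abs_deriv_comp_le hφ (Real.le_coe_toNNReal _))
  exact ⟨S ∘ₗ (-LinearMap.funLeft ℝ ℝ x), fun α hα => hS _ (hα.comp hx.1.continuous).neg⟩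

theorem IsOscillation.C2Norm_remainder_le {α : ℝ → ℝ} (hK : 1 ≤ K) (hφ : ContDiff ℝ 2 φ)
    (hφK : C2Norm φ (Icc (-R) R) ≤ K) (hα : ContDiff ℝ 2 α) (hx : IsOscillation φ v R T x)
    (hz : IsOscillation (φ + α) v R T z)
    (hh : IsForcedResponse (deriv φ ∘ x) T (-(α ∘ x)) h) :
    C2Norm (z - x - h) (Icc 0 T) ≤ (K * exp (K * T) + 1) *
      ((K * exp (K * T) ^ 2 + exp (K * T)) * C2Norm α (Icc (-R) R) ^ 2) := by
  set N := C2Norm α (Icc (-R) R)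
  have hN₀ : 0 ≤ N := C2Norm_nonneg _ _
  have hI : IsCompact (Icc (-R) R) := isCompact_Icc
  have hIconv : Convex ℝ (Icc (-R) R) := convex_Icc _ _
  have remainder := (forcedResponseRelation (deriv φ ∘ x) T).sub_mem
    (x := (_, z - x)) (y := (_, h)) (hx.sub hz _) hh
  refine IsForcedResponse.C2Norm_le remainder hK (hx.abs_deriv_comp_le hφ hφK) (by positivity)
    fun t ht => ?_
  have hxR : x t ∈ Icc (-R) R := abs_le.1 (hx.2.2.2 t ht).1
  have hzR : z t ∈ Icc (-R) R := abs_le.1 (hz.2.2.2 t ht).1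
  have hw : |z t - x t| ≤ N * exp (K * T) :=
    hx.abs_sub_le hz hK (lipschitzOnWith_of_C2Norm_le hI hIconv hφ hφK)
      (fun u hu => by simpa using abs_le_C2Norm hI hα hu) ht
  calc |deriv φ (x t) * (z t - x t) - (φ (z t) + α (z t) - φ (x t)) - -α (x t)|
      = |-(φ (z t) - φ (x t) - deriv φ (x t) * (z t - x t)) - (α (z t) - α (x t))| := by ring_nf
    _ ≤ |φ (z t) - φ (x t) - deriv φ (x t) * (z t - x t)| + |α (z t) - α (x t)| := by
        simpa only [abs_neg] using abs_sub (-(φ (z t) - φ (x t) - deriv φ (x t) * (z t - x t))) _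
    _ ≤ K * |z t - x t| ^ 2 + N * |z t - x t| := by
        gcongr
        · exact (abs_taylor_remainder_le_C2Norm_mul_sq hI hIconv hφ hxR hzR).trans (by gcongr)
        · exact abs_sub_le_C2Norm_mul hI hIconv hα hxR hzR
    _ ≤ K * (N * exp (K * T)) ^ 2 + N * (N * exp (K * T)) := by gcongr
    _ = (K * exp (K * T) ^ 2 + exp (K * T)) * N ^ 2 := by ring

end Linearization

theorem statement10_general {f : ℝ → ℝ} (hf : ContDiff ℝ 2 f) (hf₀ : f 0 = 0) {T R : ℝ}
    (hT : 0 ≤ T) (hR : 0 < R) (δ : ℝ) :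
    ∃ δ₁ > (0 : ℝ), ∃ K > (0 : ℝ), ∃ sol : (ℝ → ℝ) → ℝ → (ℝ → ℝ),
      ∀ v : ℝ, |v| < δ₁ → ∀ e : ℝ → ℝ, AdmissiblePerturbation R δ e →
        IsOscillation (f + e) v R T (sol e v) ∧
        (∀ y : ℝ → ℝ, IsOscillation (f + e) v R T y → EqOn y (sol e v) (Icc 0 T)) ∧
        (∃ L : (ℝ → ℝ) → (ℝ → ℝ),
          (∀ α β : ℝ → ℝ, L (α + β) = L α + L β) ∧
          (∀ (c : ℝ) (α : ℝ → ℝ), L (c • α) = c • L α) ∧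
          (∀ α : ℝ → ℝ, ContDiff ℝ 2 α →
            C2Norm (L α) (Icc 0 T) ≤ K * sSup ((fun t => |α (sol e v t)|) '' Icc (0 : ℝ) T)) ∧
          (∀ η > (0 : ℝ), ∃ ρ > (0 : ℝ), ∀ α : ℝ → ℝ, ContDiff ℝ 2 α → α 0 = 0 →
            C2Norm α (Icc (-R) R) ≤ ρ → AdmissiblePerturbation R δ (e + α) →
            C2Norm (sol (e + α) v - sol e v - L α) (Icc 0 T) ≤ η * C2Norm α (Icc (-R) R))) := by
  set I := Icc (-R) R
  have hI : IsCompact I := isCompact_Icc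
  let K : ℝ≥0 := 1 + (C2Norm f I + δ).toNNReal
  have hK : 1 ≤ K := le_self_add
  have hφ (e) (he : AdmissiblePerturbation R δ e) : ContDiff ℝ 2 (f + e) := hf.add he.1
  have hφK (e) (he : AdmissiblePerturbation R δ e) : C2Norm (f + e) I ≤ K :=
    calc C2Norm (f + e) I ≤ C2Norm f I + δ := he.C2Norm_add_le hf
      _ ≤ (C2Norm f I + δ).toNNReal := Real.le_coe_toNNReal _
      _ ≤ K := mod_cast le_add_self
  have hlip (e) (he : AdmissiblePerturbation R δ e) : LipschitzOnWith K (f + e) I :=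
    lipschitzOnWith_of_C2Norm_le hI (convex_Icc _ _) (hφ e he) (hφK e he)
  have existence (e v) (he : AdmissiblePerturbation R δ e) (hv : |v| < R * exp (-(K * T))) :
      ∃ y, IsOscillation (f + e) v R T y :=
    exists_isOscillation hT hK (hlip e he) (by simp [hf₀, he.2.1]) hv.le
  choose! sol hsol using existence
  refine ⟨R * exp (-(K * T)), by positivity, K * exp (K * T) + 1, by positivity, sol,
    fun v hv e he => ⟨hsol e v he hv, fun y hy => (hsol e v he hv).eqOn hy hK (hlip e he), ?_⟩⟩
  have hx := hsol e v he hv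
  obtain ⟨L, hL⟩ := hx.exists_linearMap_isForcedResponse hT (hφ e he)
  refine ⟨L, L.map_add, L.map_smul, fun α hα => ?_, fun η hη => ?_⟩
  · simpa using (hL α hα.continuous).C2Norm_le_mul_sSup hK
      (hx.abs_deriv_comp_le (hφ e he) (hφK e he)) (hα.continuous.comp hx.1.continuous).neg
  set C : ℝ := (K * exp (K * T) + 1) * (K * exp (K * T) ^ 2 + exp (K * T))
  have hC : 0 < C := by positivity
  refine ⟨η / C, by positivity, fun α hα _ hαη he' => ?_⟩
  have hz : IsOscillation (f + e + α) v R T (sol (e + α) v) := by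
    rw [add_assoc]; exact hsol _ v he' hv
  calc C2Norm (sol (e + α) v - sol e v - L α) (Icc 0 T) ≤ C * C2Norm α I * C2Norm α I := by
        rw [mul_assoc, ← sq, mul_assoc]
        exact hx.C2Norm_remainder_le hK (hφ e he) (hφK e he) hα hz (hL α hα.continuous)
    _ ≤ η * C2Norm α I := by
        gcongr
        · exact C2Norm_nonneg _ _
        · rwa [mul_comm, ← le_div_iff₀ hC]

/-- existence, uniqueness and Fréchet differentiability (with the
stated bound on the derivative) of the solution map `ε ↦ x_ε(v;·)` of
`ẍ + x + ℓx³ + ε(x) = 0`, `x(0) = 0`, `ẋ(0) = v`, on `[0,T]`. -/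
theorem statement10 (l : ℝ) (hl : l = 1 ∨ l = -1) (T : ℝ) (hT : 0 < T) :
    ∃ δ₁ > (0 : ℝ), ∃ δ₂ > (0 : ℝ), ∃ δ₃ > (0 : ℝ), ∃ K > (0 : ℝ),
      ∃ sol : (ℝ → ℝ) → ℝ → (ℝ → ℝ),
        ∀ v : ℝ, |v| < δ₁ → ∀ e : ℝ → ℝ, AdmissiblePerturbation δ₂ δ₃ e →
          -- existence:
          IsPerturbedSolution l e v δ₂ T (sol e v) ∧
          -- uniqueness:
          (∀ y : ℝ → ℝ, IsPerturbedSolution l e v δ₂ T y →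
            Set.EqOn y (sol e v) (Set.Icc 0 T)) ∧
          -- Fréchet differentiability of `ε ↦ x_ε(v;·)` with derivative `L`:
          (∃ L : (ℝ → ℝ) → (ℝ → ℝ),
            (∀ α β : ℝ → ℝ, L (α + β) = L α + L β) ∧
            (∀ (c : ℝ) (α : ℝ → ℝ), L (c • α) = c • L α) ∧
            -- the bound `‖(δx_ε/δε)·α‖_{C²([0,T])} ≤ K sup_{t∈[0,T]} |α(x_ε(v;t))|`:
            (∀ α : ℝ → ℝ, ContDiff ℝ 2 α →
              C2Norm (L α) (Set.Icc 0 T)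
                ≤ K * sSup ((fun t => |α (sol e v t)|) '' Set.Icc (0 : ℝ) T)) ∧
            -- the first-order (little-o) approximation property:
            (∀ η > (0 : ℝ), ∃ ρ > (0 : ℝ), ∀ α : ℝ → ℝ, ContDiff ℝ 2 α → α 0 = 0 →
              C2Norm α (Set.Icc (-δ₂) δ₂) ≤ ρ → AdmissiblePerturbation δ₂ δ₃ (e + α) →
              C2Norm (sol (e + α) v - sol e v - L α) (Set.Icc 0 T)
                ≤ η * C2Norm α (Set.Icc (-δ₂) δ₂))) := by
  obtain ⟨δ₁, hδ₁, K, hK, sol, hsol⟩ := statement10_general (f := fun x => x + l * x ^ 3)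
    (by fun_prop) (by simp) hT.le one_pos 1
  exact ⟨δ₁, hδ₁, 1, one_pos, 1, one_pos, K, hK, sol,
    by simpa only [isPerturbedSolution_iff_isOscillation] using hsol⟩
end

section
/- Fix ℓ ∈ {−1,1} and let V_ℓ(x) = x²/2 + ℓx⁴/4. For small v ≠ 0 define x_ℓ^M(v) = (−ℓ + ℓ(1+2ℓv²)^{1/2})^{1/2} and the period map T_ℓ(v) = 2√2 ∫₀^{x_ℓ^M(v)} (v²/2 − V_ℓ(x))^{−1/2} dx, with T_ℓ(0) = 2π. Then there exist v₀ > 0 and C > 0 such that for all |v| < v₀: |T_ℓ(v) − 2π + (3π/4)ℓv²| ≤ Cv⁴. -/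
/-!
The substitution `x = a sin t`, with `a` the amplitude of the orbit, removes the endpoint
singularity: `V_ℓ(a) - V_ℓ(a sin t)` is `(a cos t)² / 2` times the smooth factor
`1 + ℓa² (1 + sin² t) / 2`. Hence the period is a regular integral depending only on `c = ℓa²`,
and expanding the inverse square root under the integral sign gives `2π - (3π/4) c + O(c²)`.
When `ℓ² = 1` the amplitude satisfies `c = √(1 + 2ℓv²) - 1 = ℓv² + O(v⁴)`.
-/

open Real

/-- The quartic potential `V_ℓ(x) = x²/2 + ℓx⁴/4`. -/
noncomputable def Vquart (l y : ℝ) : ℝ := y ^ 2 / 2 + l * y ^ 4 / 4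

/-- `x_ℓ^M(v) = (-ℓ + ℓ(1+2ℓv²)^{1/2})^{1/2}`, the positive solution of `V_ℓ(x) = v²/2`. -/
noncomputable def xMax (l v : ℝ) : ℝ := Real.sqrt (-l + l * Real.sqrt (1 + 2 * l * v ^ 2))

/-- The period map of the quartic potential:
`T_ℓ(v) = 2√2 ∫₀^{x_ℓ^M(v)} (v²/2 - V_ℓ(x))^{-1/2} dx` for `v ≠ 0`, `T_ℓ(0) = 2π`. -/
noncomputable def periodQuart (l v : ℝ) : ℝ :=
  if v = 0 then 2 * Real.pi
  else 2 * Real.sqrt 2 * ∫ x in (0 : ℝ)..(xMax l v), (Real.sqrt (v ^ 2 / 2 - Vquart l x))⁻¹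

theorem abs_sqrt_one_add_sub_one_le {x : ℝ} (hx : -1 ≤ x) : |√(1 + x) - 1| ≤ |x| := by
  have hsq : √(1 + x) ^ 2 = 1 + x := sq_sqrt (by linarith)
  calc |√(1 + x) - 1| ≤ |√(1 + x) - 1| * (√(1 + x) + 1) :=
        le_mul_of_one_le_right (abs_nonneg _) (by linarith [sqrt_nonneg (1 + x)])
    _ = |(√(1 + x) - 1) * (√(1 + x) + 1)| := by
        rw [abs_mul, abs_of_nonneg (a := √(1 + x) + 1) (by positivity)]
    _ = |x| := by congr 1; linear_combination hsq

theorem abs_sqrt_one_add_sub_le {x : ℝ} (hx : -1 ≤ x) :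
    |√(1 + x) - (1 + x / 2)| ≤ x ^ 2 / 2 := by
  have hsq : √(1 + x) ^ 2 = 1 + x := sq_sqrt (by linarith)
  calc |√(1 + x) - (1 + x / 2)| = |√(1 + x) - 1| ^ 2 / 2 := by
        rw [abs_sub_comm, abs_of_nonneg (sub_nonneg.mpr (sqrt_one_add_le hx)), sq_abs]
        linear_combination -hsq / 2
    _ ≤ |x| ^ 2 / 2 := by gcongr ?_ ^ 2 / 2; exact abs_sqrt_one_add_sub_one_le hx
    _ = x ^ 2 / 2 := by rw [sq_abs]

theorem abs_inv_sqrt_one_add_sub_le {x : ℝ} (hx : -(1 / 2) ≤ x) :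
    |(√(1 + x))⁻¹ - (1 - x / 2)| ≤ x ^ 2 := by
  obtain ⟨s, hs⟩ : ∃ s, √(1 + x) = s := ⟨_, rfl⟩
  have hs_lower : 1 / 2 ≤ s := hs ▸ le_sqrt_of_sq_le (by linarith)
  have hsq : s ^ 2 = 1 + x := hs ▸ sq_sqrt (by linarith)
  obtain rfl : x = s ^ 2 - 1 := by linarith
  have hfactor : (s + 2) / (2 * s) ≤ (s + 1) ^ 2 := by
    rw [div_le_iff₀ (by positivity)]
    nlinarith
  calc |(√(1 + (s ^ 2 - 1)))⁻¹ - (1 - (s ^ 2 - 1) / 2)|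
      = |(s - 1) ^ 2 * ((s + 2) / (2 * s))| := by
        rw [hs]
        congr 1
        field_simp
        ring
    _ = (s - 1) ^ 2 * ((s + 2) / (2 * s)) := abs_of_nonneg (by positivity)
    _ ≤ (s - 1) ^ 2 * (s + 1) ^ 2 := by gcongr
    _ = (s ^ 2 - 1) ^ 2 := by ring

theorem integral_mul_cos_smul_comp_mul_sin {E : Type*} [NormedAddCommGroup E] [NormedSpace ℝ E]
    (f : ℝ → E) (a : ℝ) :
    ∫ t in (0 : ℝ)..(π / 2), (a * cos t) • f (a * sin t) = ∫ x in (0 : ℝ)..a, f x := by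
  have hcos_nonneg (t : ℝ) (ht : t ∈ Set.Ioo (min 0 (π / 2)) (max 0 (π / 2))) : 0 ≤ cos t := by
    rw [min_eq_left pi_div_two_pos.le, max_eq_right pi_div_two_pos.le] at ht
    exact cos_nonneg_of_mem_Icc ⟨by linarith [ht.1, pi_pos], ht.2.le⟩
  have hsin_subst :
      ∫ t in (0 : ℝ)..(π / 2), cos t • f (a * sin t) = ∫ s in (0 : ℝ)..1, f (a * s) := by
    simpa only [Function.comp_apply, sin_zero, sin_pi_div_two] using
      intervalIntegral.integral_deriv_smul_comp_of_deriv_nonneg (g := fun s ↦ f (a * s))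
        continuousOn_sin (fun t _ ↦ hasDerivAt_sin t) hcos_nonneg
  calc ∫ t in (0 : ℝ)..(π / 2), (a * cos t) • f (a * sin t)
      = a • ∫ s in (0 : ℝ)..1, f (a * s) := by
        simp only [mul_smul, intervalIntegral.integral_smul, hsin_subst]
    _ = ∫ x in (0 : ℝ)..a, f x := by
        rw [intervalIntegral.smul_integral_comp_mul_left, mul_zero, mul_one]

/-- The period of the orbit of amplitude `a` of the Duffing equation `ẍ = -x - ℓx³`, as a function
of `c = ℓa² > -1`, written in the angle `t` given by `x = a sin t`. -/
noncomputable def duffingPeriod (c : ℝ) : ℝ :=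
  4 * ∫ t in (0 : ℝ)..(π / 2), (√(1 + c * ((1 + sin t ^ 2) / 2)))⁻¹

theorem duffingPeriod_zero : duffingPeriod 0 = 2 * π := by
  simp only [duffingPeriod, zero_mul, add_zero, sqrt_one, inv_one,
    intervalIntegral.integral_const, sub_zero, smul_eq_mul, mul_one]
  ring

theorem Vquart_sub_Vquart_mul_sin (l a t : ℝ) :
    Vquart l a - Vquart l (a * sin t) =
      (a * cos t) ^ 2 * (1 + l * a ^ 2 * ((1 + sin t ^ 2) / 2)) / 2 := by
  unfold Vquart
  rw [mul_pow a (cos t), cos_sq']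
  ring

theorem two_mul_sqrt_two_mul_integral_inv_sqrt_eq_duffingPeriod (l : ℝ) {a : ℝ} (ha : 0 < a) :
    2 * √2 * ∫ x in (0 : ℝ)..a, (√(Vquart l a - Vquart l x))⁻¹ = duffingPeriod (l * a ^ 2) := by
  have hintegrand : ∀ t ∈ Set.Ioo 0 (π / 2),
      2 * √2 * (a * cos t * (√(Vquart l a - Vquart l (a * sin t)))⁻¹) =
        4 * (√(1 + l * a ^ 2 * ((1 + sin t ^ 2) / 2)))⁻¹ := by
    intro t ht
    have hcos : 0 < cos t := cos_pos_of_mem_Ioo ⟨by linarith [ht.1, pi_pos], ht.2⟩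
    rw [Vquart_sub_Vquart_mul_sin, sqrt_div' _ zero_le_two, sqrt_mul (sq_nonneg _),
      sqrt_sq (by positivity), inv_div, div_eq_mul_inv, mul_inv]
    field_simp
    rw [sq_sqrt zero_le_two]
    norm_num
  simp only [← integral_mul_cos_smul_comp_mul_sin _ a, duffingPeriod,
    smul_eq_mul, ← intervalIntegral.integral_const_mul]
  exact intervalIntegral.integral_congr_Ioo_of_le pi_div_two_pos.le hintegrand

theorem integral_one_sub_mul_one_add_sin_sq (c : ℝ) :
    ∫ t in (0 : ℝ)..(π / 2), (1 - c * ((1 + sin t ^ 2) / 2) / 2) = π / 2 - 3 * π / 16 * c := by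
  have hrearrange (t : ℝ) :
      1 - c * ((1 + sin t ^ 2) / 2) / 2 = (1 - c / 4) - c / 4 * sin t ^ 2 := by ring
  simp_rw [hrearrange]
  rw [intervalIntegral.integral_sub intervalIntegrable_const
    (Continuous.intervalIntegrable (by fun_prop) _ _), intervalIntegral.integral_const_mul,
    integral_sin_sq, intervalIntegral.integral_const, cos_pi_div_two, sin_zero, smul_eq_mul]
  ring

theorem abs_duffingPeriod_sub_le {c : ℝ} (hc : -(1 / 2) ≤ c) :
    |duffingPeriod c - (2 * π - 3 * π / 4 * c)| ≤ 2 * π * c ^ 2 := by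
  set k : ℝ → ℝ := fun t ↦ (1 + sin t ^ 2) / 2
  have hk_nonneg (t : ℝ) : 0 ≤ k t := by positivity
  have hk_le (t : ℝ) : k t ≤ 1 := by
    simp only [k]
    linarith [sin_sq_le_one t]
  have hck (t : ℝ) : -(1 / 2) ≤ c * k t := by nlinarith [hk_nonneg t, hk_le t]
  have hcont : Continuous fun t ↦ (√(1 + c * k t))⁻¹ :=
    Continuous.inv₀ (by fun_prop) fun t ↦ (sqrt_pos.mpr (by linarith [hck t])).ne'
  have hpointwise (t : ℝ) : ‖(√(1 + c * k t))⁻¹ - (1 - c * k t / 2)‖ ≤ c ^ 2 :=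
    calc |(√(1 + c * k t))⁻¹ - (1 - c * k t / 2)| ≤ (c * k t) ^ 2 :=
          abs_inv_sqrt_one_add_sub_le (hck t)
      _ = c ^ 2 * k t ^ 2 := mul_pow c (k t) 2
      _ ≤ c ^ 2 := mul_le_of_le_one_right (sq_nonneg c) (pow_le_one₀ (hk_nonneg t) (hk_le t))
  have herror : duffingPeriod c - (2 * π - 3 * π / 4 * c) =
      4 * ∫ t in (0 : ℝ)..(π / 2), ((√(1 + c * k t))⁻¹ - (1 - c * k t / 2)) := by
    rw [intervalIntegral.integral_sub (hcont.intervalIntegrable _ _)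
      (Continuous.intervalIntegrable (by fun_prop) _ _),
      integral_one_sub_mul_one_add_sin_sq, duffingPeriod]
    ring
  calc |duffingPeriod c - (2 * π - 3 * π / 4 * c)|
      = 4 * |∫ t in (0 : ℝ)..(π / 2), ((√(1 + c * k t))⁻¹ - (1 - c * k t / 2))| := by
        rw [herror, abs_mul, abs_of_pos four_pos]
    _ ≤ 4 * (c ^ 2 * |π / 2 - 0|) := by
        gcongr
        exact intervalIntegral.norm_integral_le_of_norm_le_const fun t _ ↦ hpointwise t
    _ = 2 * π * c ^ 2 := by
        rw [sub_zero, abs_of_pos pi_div_two_pos]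
        ring

theorem xMax_sq (l v : ℝ) : xMax l v ^ 2 = l * (√(1 + 2 * l * v ^ 2) - 1) := by
  have hradicand : -l + l * √(1 + 2 * l * v ^ 2) = l * (√(1 + 2 * l * v ^ 2) - 1) := by ring
  rw [xMax, hradicand]
  refine sq_sqrt ?_
  rcases le_total 0 l with hl | hl
  · exact mul_nonneg hl (sub_nonneg.mpr (one_le_sqrt.mpr (le_add_of_nonneg_right (by positivity))))
  · refine mul_nonneg_of_nonpos_of_nonpos hl (sub_nonpos.mpr (sqrt_le_one.mpr ?_))
    nlinarith [sq_nonneg v]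

theorem xMax_pos {l v : ℝ} (hl : l ≠ 0) (hv : v ≠ 0) : 0 < xMax l v := by
  have hsqrt_ne : √(1 + 2 * l * v ^ 2) ≠ 1 := by
    rw [Ne, sqrt_eq_one, add_eq_left]
    positivity
  refine (sqrt_nonneg _).lt_of_ne' ((pow_ne_zero_iff two_ne_zero).mp ?_)
  exact xMax_sq l v ▸ mul_ne_zero hl (sub_ne_zero.mpr hsqrt_ne)

theorem Vquart_xMax {l v : ℝ} (hl : l ^ 2 = 1) (hv : -1 ≤ 2 * l * v ^ 2) :
    Vquart l (xMax l v) = v ^ 2 / 2 := by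
  have hsq : √(1 + 2 * l * v ^ 2) ^ 2 = 1 + 2 * l * v ^ 2 := sq_sqrt (by linarith)
  have hpow : xMax l v ^ 4 = (xMax l v ^ 2) ^ 2 := by ring
  rw [Vquart, hpow, xMax_sq]
  linear_combination
    (l / 4 * (√(1 + 2 * l * v ^ 2) - 1) ^ 2 + v ^ 2 / 2) * hl + l / 4 * hsq

theorem periodQuart_eq_duffingPeriod {l v : ℝ} (hl : l ^ 2 = 1) (hv : -1 ≤ 2 * l * v ^ 2) :
    periodQuart l v = duffingPeriod (√(1 + 2 * l * v ^ 2) - 1) := by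
  rcases eq_or_ne v 0 with rfl | hv_ne
  · simp [periodQuart, duffingPeriod_zero]
  have hl_ne : l ≠ 0 := by
    rintro rfl
    norm_num at hl
  have hamplitude : l * xMax l v ^ 2 = √(1 + 2 * l * v ^ 2) - 1 := by
    rw [xMax_sq]
    linear_combination (√(1 + 2 * l * v ^ 2) - 1) * hl
  rw [periodQuart, if_neg hv_ne, ← Vquart_xMax hl hv,
    two_mul_sqrt_two_mul_integral_inv_sqrt_eq_duffingPeriod l (xMax_pos hl_ne hv_ne), hamplitude]

theorem abs_periodQuart_sub_le {l v : ℝ} (hl : l ^ 2 = 1) (hv : -(3 / 4) ≤ 2 * l * v ^ 2) :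
    |periodQuart l v - 2 * π + 3 * π / 4 * l * v ^ 2| ≤ 19 * π / 2 * v ^ 4 := by
  obtain ⟨w, hw⟩ : ∃ w, 2 * l * v ^ 2 = w := ⟨_, rfl⟩
  rw [periodQuart_eq_duffingPeriod hl (by linarith), hw]
  rw [hw] at hv
  have hw_ge : -1 ≤ w := by linarith
  have hc : -(1 / 2) ≤ √(1 + w) - 1 := by
    have : 1 / 2 ≤ √(1 + w) := le_sqrt_of_sq_le (by linarith)
    linarith
  calc |duffingPeriod (√(1 + w) - 1) - 2 * π + 3 * π / 4 * l * v ^ 2|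
      = |(duffingPeriod (√(1 + w) - 1) - (2 * π - 3 * π / 4 * (√(1 + w) - 1)))
          - 3 * π / 4 * (√(1 + w) - (1 + w / 2))| := by
        congr 1
        linear_combination 3 * π / 8 * hw
    _ ≤ |duffingPeriod (√(1 + w) - 1) - (2 * π - 3 * π / 4 * (√(1 + w) - 1))|
          + 3 * π / 4 * |√(1 + w) - (1 + w / 2)| := by
        refine (abs_sub _ _).trans_eq ?_
        rw [abs_mul, abs_of_pos (a := 3 * π / 4) (by positivity)]
    _ ≤ 2 * π * (√(1 + w) - 1) ^ 2 + 3 * π / 4 * (w ^ 2 / 2) := by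
        gcongr
        · exact abs_duffingPeriod_sub_le hc
        · exact abs_sqrt_one_add_sub_le hw_ge
    _ ≤ 2 * π * w ^ 2 + 3 * π / 4 * (w ^ 2 / 2) := by
        gcongr ?_ + _
        gcongr ?_ * ?_
        exact sq_le_sq.mpr (abs_sqrt_one_add_sub_one_le hw_ge)
    _ = 19 * π / 2 * v ^ 4 := by
        rw [← hw]
        linear_combination 19 * π / 2 * v ^ 4 * hl

/-- `|T_ℓ(v) - 2π + (3π/4)ℓv²| ≤ Cv⁴` for all small `v`. -/
theorem statement14 (l : ℝ) (hl : l = 1 ∨ l = -1) :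
    ∃ v₀ > (0 : ℝ), ∃ C > (0 : ℝ), ∀ v : ℝ, |v| < v₀ →
      |periodQuart l v - 2 * Real.pi + 3 * Real.pi / 4 * l * v ^ 2| ≤ C * v ^ 4 := by
  refine ⟨1 / 2, by norm_num, 19 * π / 2, by positivity, fun v hv ↦ ?_⟩
  have hv_sq : v ^ 2 ≤ (1 / 2) ^ 2 := sq_le_sq' (abs_lt.mp hv).1.le (abs_lt.mp hv).2.le
  refine abs_periodQuart_sub_le (sq_eq_one_iff.mpr hl) ?_
  rcases hl with rfl | rfl <;> nlinarith
end
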